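/- arXiv:math/0611901 — 4 statements merged into one kernel-verified Lean document; each statement's English description precedes it below -/
import Mathlib

section
/- Let n ≥ 1 and n/(n+1) < q < p ≤ 1, fix ψ as in the context, and let Ω ⊆ ℝⁿ be a bounded domain whose complement is thick in the sense of (n−q)-Hausdorff content, i.e. there is c > 0 such that H^{n−q}_∞( Ωᶜ ∩ B(x,r) ) ≥ c·r^{n−q} for every x ∈ Ωᶜ and every r > 0. Then there is a finite constant C = C(p,q,n,c,Ω,ψ) such that every smooth u : ℝⁿ → ℝ with compact support contained in Ω satisfies ∫_Ω ( |u(x)| / dist(x,∂Ω) )^p dx ≤ C · Σ_{j=1}^n ‖ sup_{t>0} |(∂_j u) * ψ_t| ‖_{L^p(ℝⁿ)}^p. -/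
open MeasureTheory Metric Set ENNReal NNReal

noncomputable section

/-- The partial derivative `∂_j φ` in the `j`-th coordinate direction. -/
def pderivIdx (n : ℕ) (j : Fin n) (φ : EuclideanSpace ℝ (Fin n) → ℝ)
    (x : EuclideanSpace ℝ (Fin n)) : ℝ :=
  fderiv ℝ φ x (EuclideanSpace.single j 1)

/-- `sup_{t>0} |(∂_j u) * ψ_t|(x)`, the smooth maximal function of the partial
derivative of a differentiable function `u`, where `ψ_t(z) = t^{-n} ψ(z/t)`. -/
def convMax (n : ℕ) (ψ u : EuclideanSpace ℝ (Fin n) → ℝ) (j : Fin n)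
    (x : EuclideanSpace ℝ (Fin n)) : ℝ≥0∞ :=
  ⨆ (t : {s : ℝ // 0 < s}),
    ENNReal.ofReal |∫ y, pderivIdx n j u y * ((t.1⁻¹) ^ n * ψ (t.1⁻¹ • (x - y)))|

/-- The `s`-Hausdorff content `H^s_∞(A)`, defined via countable coverings by balls. -/
def hContent (n : ℕ) (s : ℝ) (A : Set (EuclideanSpace ℝ (Fin n))) : ℝ≥0∞ :=
  sInf {r : ℝ≥0∞ | ∃ (x : ℕ → EuclideanSpace ℝ (Fin n)) (ρ : ℕ → ℝ),
    (∀ k, 0 < ρ k) ∧ A ⊆ ⋃ k, ball (x k) (ρ k) ∧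
    r = ∑' k, ENNReal.ofReal (ρ k ^ s)}


/-- scaled averaging operator -/
def cv {n : ℕ} (K f : EuclideanSpace ℝ (Fin n) → ℝ) (t : ℝ) (y : EuclideanSpace ℝ (Fin n)) : ℝ :=
  ∫ w, K w * f (y - t • w)

section
variable {n : ℕ}
local notation "E" => EuclideanSpace ℝ (Fin n)

lemma cv_eq_scaled (K f : E → ℝ) {t : ℝ} (ht : 0 < t) (y : E) :
    cv K f t y = ∫ w, ((t⁻¹) ^ n * K (t⁻¹ • w)) * f (y - w) := by
  have h := Measure.integral_comp_inv_smul_of_nonneg (volume : Measure E)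
    (fun w => K w * f (y - t • w)) ht.le
  simp only [smul_inv_smul₀ ht.ne', finrank_euclideanSpace, Fintype.card_fin, smul_eq_mul] at h
  unfold cv
  have h2 : ∫ w, ((t⁻¹) ^ n * K (t⁻¹ • w)) * f (y - w)
      = (t⁻¹)^n * ∫ w, K (t⁻¹ • w) * f (y - w) := by
    rw [← integral_const_mul]; congr 1; ext w; ring
  rw [h2, h, ← mul_assoc, ← mul_pow, inv_mul_cancel₀ ht.ne', one_pow, one_mul]

lemma cv_eq_def (K f : E → ℝ) {t : ℝ} (ht : 0 < t) (y : E) :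
    cv K f t y = ∫ z, f z * ((t⁻¹) ^ n * K (t⁻¹ • (y - z))) := by
  rw [cv_eq_scaled K f ht y]
  rw [← integral_sub_left_eq_self _ volume y]
  congr 1; ext w; simp; ring

lemma cv_eq_conv (K f : E → ℝ) {t : ℝ} (ht : 0 < t) :
    cv K f t = convolution (fun w => (t⁻¹) ^ n * K (t⁻¹ • w)) f
      (ContinuousLinearMap.lsmul ℝ ℝ) volume := by
  ext y
  rw [cv_eq_scaled K f ht y]
  rfl

lemma hcs_scaled {K : E → ℝ} (hK : HasCompactSupport K) {t : ℝ} (ht : 0 < t) :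
    HasCompactSupport (fun w : E => (t⁻¹) ^ n * K (t⁻¹ • w)) := by
  have : HasCompactSupport (fun w : E => K (t⁻¹ • w)) := by
    exact hK.comp_homeomorph (Homeomorph.smulOfNeZero (t⁻¹) (inv_ne_zero ht.ne'))
  exact this.mul_left

/-- directional derivative -/
def pd (v : E) (f : E → ℝ) (x : E) : ℝ := fderiv ℝ f x v

lemma pd_contDiff (v : E) {f : E → ℝ} (hf : ContDiff ℝ (⊤ : ℕ∞) f) :
    ContDiff ℝ (⊤ : ℕ∞) (pd v f) := by
  unfold pd
  have : ContDiff ℝ (⊤ : ℕ∞) (fderiv ℝ f) := hf.fderiv_right (by simp)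
  exact this.clm_apply contDiff_const

lemma pd_hcs (v : E) {f : E → ℝ} (hf : HasCompactSupport f) : HasCompactSupport (pd v f) :=
  hf.fderiv_apply ℝ v

lemma integrable_mul_hcs {K f : E → ℝ} (hK : Continuous K) (hK' : HasCompactSupport K)
    (hf : Continuous f) : Integrable (fun w => K w * f w) :=
  (hK.mul hf).integrable_of_hasCompactSupport hK'.mul_right

lemma cv_contDiff {K f : E → ℝ} (hK : Continuous K)
    (hf : ContDiff ℝ (⊤ : ℕ∞) f) (hf' : HasCompactSupport f) {t : ℝ} (ht : 0 < t) :
    ContDiff ℝ (⊤ : ℕ∞) (cv K f t) := by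
  rw [cv_eq_conv K f ht]
  refine hf'.contDiff_convolution_right _ ?_ hf
  exact (by fun_prop : Continuous (fun w : E => (t⁻¹) ^ n * K (t⁻¹ • w))).locallyIntegrable

lemma cv_continuous {K f : E → ℝ} (hK : Continuous K) (hK' : HasCompactSupport K)
    (hf : Continuous f) {t : ℝ} (ht : 0 < t) : Continuous (cv K f t) := by
  rw [cv_eq_conv K f ht]
  refine (hcs_scaled hK' ht).continuous_convolution_left _ ?_ hf.locallyIntegrable
  fun_prop

lemma cv_pd {K f : E → ℝ} (hK : Continuous K)
    (hf : ContDiff ℝ (⊤ : ℕ∞) f) (hf' : HasCompactSupport f) {t : ℝ} (ht : 0 < t) (v : E) :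
    pd v (cv K f t) = cv K (pd v f) t := by
  have hl : LocallyIntegrable (fun w : E => (t⁻¹) ^ n * K (t⁻¹ • w)) volume :=
    (by fun_prop : Continuous (fun w : E => (t⁻¹) ^ n * K (t⁻¹ • w))).locallyIntegrable
  ext y
  have hf1 : ContDiff ℝ 1 f := hf.of_le (by norm_cast)
  have h := hf'.hasFDerivAt_convolution_right (μ := volume) (ContinuousLinearMap.lsmul ℝ ℝ) hl hf1 y
  rw [cv_eq_conv K _ ht, cv_eq_conv K _ ht, pd, h.fderiv]
  rw [convolution_precompR_apply _ hl (hf'.fderiv ℝ) (hf1.continuous_fderiv one_ne_zero)]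
  rfl

/-- derivative hitting the kernel -/
lemma cv_hasFDerivAt_left {K f : E → ℝ} (hK : ContDiff ℝ (⊤ : ℕ∞) K) (hK' : HasCompactSupport K)
    (hf : Continuous f) {t : ℝ} (ht : 0 < t) (y : E) :
    DifferentiableAt ℝ (cv K f t) y ∧ ∀ v, pd v (cv K f t) y = t⁻¹ * cv (pd v K) f t y := by
  have hs := hcs_scaled hK' ht
  have hK1 : ContDiff ℝ 1 K := hK.of_le (by norm_cast)
  have hc : ContDiff ℝ 1 (fun w : E => (t⁻¹) ^ n * K (t⁻¹ • w)) := by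
    fun_prop
  have h := hs.hasFDerivAt_convolution_left (μ := volume) (ContinuousLinearMap.lsmul ℝ ℝ) hc
    hf.locallyIntegrable y
  rw [cv_eq_conv K _ ht]
  refine ⟨h.differentiableAt, fun v => ?_⟩
  rw [pd, h.fderiv, cv_eq_scaled _ _ ht]
  rw [← convolution_flip, ContinuousLinearMap.precompL,  ContinuousLinearMap.flip_flip]
  rw [convolution_precompR_apply _ hf.locallyIntegrable (hs.fderiv ℝ) (hc.continuous_fderiv one_ne_zero)]
  rw [convolution_flip, convolution_def]
  simp only [ContinuousLinearMap.lsmul_apply, smul_eq_mul]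
  rw [← integral_const_mul]
  congr 1; ext w
  have : fderiv ℝ (fun w : E => (t⁻¹) ^ n * K (t⁻¹ • w)) w v
      = t⁻¹ * ((t⁻¹) ^ n * fderiv ℝ K (t⁻¹ • w) v) := by
    have hd : HasFDerivAt K (fderiv ℝ K (t⁻¹ • w)) (t⁻¹ • w) :=
      (hK1.differentiable one_ne_zero _).hasFDerivAt
    have h2 : HasFDerivAt (fun w : E => t⁻¹ • w) (t⁻¹ • ContinuousLinearMap.id ℝ E) w :=
      (hasFDerivAt_id w).const_smul t⁻¹
    have h3 := (hd.comp w h2).const_mul ((t⁻¹)^n)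
    rw [HasFDerivAt.fderiv (f := (fun w : E => (t⁻¹) ^ n * K (t⁻¹ • w))) h3]
    simp; ring
  rw [this, pd]; ring

/-- derivative in the scale -/
lemma cv_hasDerivAt_scale {K f : E → ℝ} (hK : Continuous K) (hK' : HasCompactSupport K)
    (hf : ContDiff ℝ (⊤ : ℕ∞) f) (hf' : HasCompactSupport f) (t : ℝ) (y : E) :
    HasDerivAt (fun s => cv K f s y)
      (-∑ j, cv (fun w => w j * K w) (pd (EuclideanSpace.single j 1) f) t y) t := by
  have hf1 : ContDiff ℝ 1 f := hf.of_le (by norm_cast)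
  obtain ⟨B, hB⟩ := (hf'.fderiv ℝ).exists_bound_of_continuous (hf1.continuous_fderiv one_ne_zero)
  have hfc := hf1.continuous
  have hfd := hf1.continuous_fderiv one_ne_zero
  have key := hasDerivAt_integral_of_dominated_loc_of_deriv_le (μ := (volume : Measure E))
    (F := fun s w => K w * f (y - s • w)) (F' := fun s w => K w * fderiv ℝ f (y - s • w) (-w))
    (x₀ := t) (s := univ) (bound := fun w => |K w| * (B * ‖w‖)) Filter.univ_mem
    (Filter.Eventually.of_forall fun s => by
      apply Continuous.aestronglyMeasurable; fun_prop)
    (integrable_mul_hcs hK hK' (by fun_prop))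
    (by apply Continuous.aestronglyMeasurable; fun_prop)
    (Filter.Eventually.of_forall fun w s _ => by
      rw [norm_mul, Real.norm_eq_abs]
      gcongr
      refine (ContinuousLinearMap.le_opNorm _ _).trans ?_
      rw [norm_neg]; gcongr; exact hB _)
    (integrable_mul_hcs hK.abs hK'.norm (by fun_prop))
    (Filter.Eventually.of_forall fun w s _ => by
      have hd : HasFDerivAt f (fderiv ℝ f (y - s • w)) (y - s • w) :=
        (hf1.differentiable one_ne_zero _).hasFDerivAt
      have h2 : HasDerivAt (fun s : ℝ => y - s • w) (-w) s := by
        simpa using ((hasDerivAt_id s).smul_const w).const_sub y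
      exact (hd.comp_hasDerivAt s h2).const_mul _)
  have e : (-∑ j, cv (fun w => w j * K w) (pd (EuclideanSpace.single j 1) f) t y)
      = ∫ w, K w * fderiv ℝ f (y - t • w) (-w) := by
    unfold cv
    rw [← integral_finsetSum, ← integral_neg]
    · congr 1; ext w
      have : w = ∑ j, w j • (EuclideanSpace.single j (1:ℝ) : E) := by
        ext i; simp [Finset.sum_apply, Pi.single_apply]
      rw [map_neg, mul_neg]
      congr 1
      conv_rhs => rw [this]
      rw [map_sum, Finset.mul_sum]
      rw [← this]
      refine Finset.sum_congr rfl fun j _ => ?_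
      rw [map_smul, smul_eq_mul, pd]; ring
    · intro j _
      refine integrable_mul_hcs (by fun_prop) hK'.mul_left ?_
      have := (pd_contDiff (EuclideanSpace.single j 1) hf).continuous
      fun_prop
  rw [e]
  exact key.2

lemma cv_zero {K f : E → ℝ} (hK : ∫ x, K x = 1) (y : E) : cv K f 0 y = f y := by
  simp [cv, integral_mul_const, hK]

lemma cv_comp {K L f : E → ℝ} (hK : Continuous K) (hK' : HasCompactSupport K)
    (hL : Continuous L) (hL' : HasCompactSupport L)
    (hf : Continuous f) (ε t : ℝ) (y : E) :
    cv (cv L K ε) f t y = ∫ w, K w * cv L f (ε * t) (y - t • w) := by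
  have h1 : cv (cv L K ε) f t y = ∫ z, ∫ v, L v * K (z - ε • v) * f (y - t • z) := by
    unfold cv
    congr 1; ext z
    rw [← integral_mul_const]
  have h2 : ∀ v : E, ∫ z, L v * K (z - ε • v) * f (y - t • z)
      = ∫ w, L v * K w * f (y - t • w - (ε * t) • v) := by
    intro v
    rw [← integral_add_right_eq_self _ (ε • v)]
    congr 1; ext w
    rw [add_sub_cancel_right, smul_add, smul_smul, mul_comm ε t, sub_sub]
  have hcl := hL'.isCompact
  have hck := hK'.isCompact
  rw [h1, integral_integral_swap]
  · simp_rw [h2]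
    rw [integral_integral_swap]
    · congr 1; ext w
      unfold cv
      rw [← integral_const_mul]; congr 1; ext v; ring
    · refine Continuous.integrable_of_hasCompactSupport (by fun_prop) ?_
      refine HasCompactSupport.intro (hcl.prod hck) ?_
      rintro ⟨v, w⟩ h
      simp only [mem_prod, not_and_or] at h
      rcases h with h | h
      · simp [Function.uncurry, image_eq_zero_of_notMem_tsupport h]
      · simp [Function.uncurry, image_eq_zero_of_notMem_tsupport h]
  · refine Continuous.integrable_of_hasCompactSupport (by fun_prop) ?_
    refine HasCompactSupport.intro
      (((hck.prod hcl).image (f := fun p : E × E => (p.1 + ε • p.2, p.2)) (by fun_prop))) ?_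
    rintro ⟨z, v⟩ h
    by_contra h0
    apply h
    refine ⟨(z - ε • v, v), ⟨?_, ?_⟩, by simp⟩
    · by_contra h3
      apply h0
      simp [Function.uncurry, image_eq_zero_of_notMem_tsupport h3]
    · by_contra h3
      apply h0
      simp [Function.uncurry, image_eq_zero_of_notMem_tsupport h3]

end

section
variable {n : ℕ}
local notation "E" => EuclideanSpace ℝ (Fin n)

/-- iterated remainders `∏ (1 - S_{2^{-i}}) η` -/
def iterS (ψ η : E → ℝ) : ℕ → E → ℝ
  | 0 => η
  | k + 1 => fun z => iterS ψ η k z - cv ψ (iterS ψ η k) ((1 / 2 : ℝ) ^ k) z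

lemma tsupport_subset_closedBall {K : E → ℝ} {R : ℝ} (h : ∀ z, R < ‖z‖ → K z = 0) :
    HasCompactSupport K := by
  refine HasCompactSupport.intro (isCompact_closedBall (0 : E) R) ?_
  intro z hz
  apply h
  simpa using hz

lemma iterS_props {ψ : E → ℝ} (hψ : ContDiff ℝ (⊤ : ℕ∞) ψ)
    (hψ1 : ∀ z, 1 ≤ ‖z‖ → ψ z = 0)
    {η : E → ℝ} (hη : ContDiff ℝ (⊤ : ℕ∞) η) {R : ℝ} (hηR : ∀ z, R < ‖z‖ → η z = 0) (k : ℕ) :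
    ContDiff ℝ (⊤ : ℕ∞) (iterS ψ η k) ∧
      ∀ z, R + 2 * (1 - (1 / 2 : ℝ) ^ k) < ‖z‖ → iterS ψ η k z = 0 := by
  induction k with
  | zero => exact ⟨hη, by simpa [iterS] using hηR⟩
  | succ k ih =>
    obtain ⟨h1, h2⟩ := ih
    have hp : (0 : ℝ) < (1 / 2 : ℝ) ^ k := by positivity
    refine ⟨h1.sub (cv_contDiff hψ.continuous h1 (tsupport_subset_closedBall h2) hp), ?_⟩
    intro z hz
    rw [pow_succ] at hz
    simp only [iterS]
    rw [h2 z (by linarith), cv, zero_sub, neg_eq_zero]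
    refine integral_eq_zero_of_ae (Filter.Eventually.of_forall fun w => ?_)
    by_cases hw : 1 ≤ ‖w‖
    · simp [hψ1 w hw]
    · push Not at hw
      have : iterS ψ η k (z - (1 / 2 : ℝ) ^ k • w) = 0 := by
        apply h2
        have h3 : ‖z‖ - ‖(1 / 2 : ℝ) ^ k • w‖ ≤ ‖z - (1 / 2 : ℝ) ^ k • w‖ := norm_sub_norm_le _ _
        rw [norm_smul, Real.norm_of_nonneg hp.le] at h3
        nlinarith
      simp only [this, mul_zero, Pi.zero_apply]

lemma iterS_pd {ψ : E → ℝ} (hψ : ContDiff ℝ (⊤ : ℕ∞) ψ)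
    (hψ1 : ∀ z, 1 ≤ ‖z‖ → ψ z = 0)
    {η : E → ℝ} (hη : ContDiff ℝ (⊤ : ℕ∞) η) {R : ℝ} (hηR : ∀ z, R < ‖z‖ → η z = 0) (v : E)
    (k : ℕ) : pd v (iterS ψ η k) = iterS ψ (pd v η) k := by
  induction k with
  | zero => rfl
  | succ k ih =>
    obtain ⟨h1, h2⟩ := iterS_props hψ hψ1 hη hηR k
    have hp : (0 : ℝ) < (1 / 2 : ℝ) ^ k := by positivity
    have hcs := tsupport_subset_closedBall h2
    have h3 := cv_contDiff hψ.continuous h1 hcs hp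
    ext z
    have e : pd v (iterS ψ η (k+1)) z
      = pd v (iterS ψ η k) z - pd v (cv ψ (iterS ψ η k) ((1 / 2 : ℝ) ^ k)) z := by
      simp only [pd, iterS]
      rw [fderiv_fun_sub (h1.differentiable (by simp) z) (h3.differentiable (by simp) z)]
      rfl
    rw [e, cv_pd hψ.continuous h1 hcs hp, ih]
    rfl

lemma abs_cv_le {K f : E → ℝ} (hK : Continuous K) (hK' : HasCompactSupport K)
    {B : ℝ} (hB : ∀ z, |f z| ≤ B) (t : ℝ) (y : E) :
    |cv K f t y| ≤ (∫ w, |K w|) * B := by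
  unfold cv
  rw [← integral_mul_const, ← Real.norm_eq_abs]
  refine norm_integral_le_of_norm_le
    ((hK.abs.integrable_of_hasCompactSupport hK'.norm).mul_const B) ?_
  refine Filter.Eventually.of_forall fun w => ?_
  rw [norm_mul, Real.norm_eq_abs, Real.norm_eq_abs]
  gcongr
  exact hB _

lemma norm_fderiv_le_sum (f : E → ℝ) (z : E) :
    ‖fderiv ℝ f z‖ ≤ ∑ j, |pd (EuclideanSpace.single j 1) f z| := by
  refine ContinuousLinearMap.opNorm_le_bound _ (Finset.sum_nonneg fun _ _ => abs_nonneg _) ?_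
  intro w
  have : w = ∑ j, w j • (EuclideanSpace.single j (1:ℝ) : E) := by
    ext i; simp [Finset.sum_apply, Pi.single_apply]
  have h2 : fderiv ℝ f z w = ∑ j, w j * pd (EuclideanSpace.single j 1) f z := by
    conv_lhs => rw [this]
    rw [map_sum]
    refine Finset.sum_congr rfl fun j _ => ?_
    rw [map_smul, smul_eq_mul, pd]
  rw [h2, Finset.sum_mul]
  refine (norm_sum_le _ _).trans (Finset.sum_le_sum fun j _ => ?_)
  rw [norm_mul, mul_comm, Real.norm_eq_abs (pd _ _ _)]
  gcongr
  exact PiLp.norm_apply_le w j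

lemma iterS_bound {ψ : E → ℝ} (hψ : ContDiff ℝ (⊤ : ℕ∞) ψ)
    (hψ1 : ∀ z, 1 ≤ ‖z‖ → ψ z = 0) (hψint : ∫ x, ψ x = 1) (m : ℕ) :
    ∀ {η : E → ℝ} (_ : ContDiff ℝ (⊤ : ℕ∞) η) {R : ℝ} (_ : ∀ z, R < ‖z‖ → η z = 0),
    ∃ C : ℝ, 0 ≤ C ∧ ∀ k z, |iterS ψ η k z| ≤ C * ((1 + ∫ w, |ψ w|) / 2 ^ m) ^ k := by
  have hψcs : HasCompactSupport ψ := tsupport_subset_closedBall (R := 1) fun z hz => hψ1 z hz.le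
  have hI : 0 ≤ ∫ w, |ψ w| := integral_nonneg fun _ => abs_nonneg _
  set A := 1 + ∫ w, |ψ w| with hA
  induction m with
  | zero =>
    intro η hη R hηR
    obtain ⟨C, hC⟩ := (tsupport_subset_closedBall hηR).exists_bound_of_continuous hη.continuous
    have hC0 : 0 ≤ C := (norm_nonneg _).trans (hC 0)
    refine ⟨C, hC0, fun k => ?_⟩
    induction k with
    | zero => intro z; simpa [iterS] using hC z
    | succ k ih =>
      intro z
      simp only [iterS]
      have h := abs_cv_le hψ.continuous hψcs ih ((1 / 2 : ℝ) ^ k) z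
      refine (abs_sub _ _).trans ?_
      refine (add_le_add (ih z) h).trans (le_of_eq ?_)
      rw [hA, pow_succ]; ring
  | succ m IH =>
    intro η hη R hηR
    have hpd : ∀ j : Fin n, ∃ C : ℝ, 0 ≤ C ∧ ∀ k z,
        |iterS ψ (pd (EuclideanSpace.single j 1) η) k z| ≤ C * (A / 2 ^ m) ^ k := by
      intro j
      refine IH (R := R) (pd_contDiff _ hη) ?_
      intro z hz
      have : z ∉ tsupport η := by
        intro hz'
        have : tsupport η ⊆ closedBall 0 R := by
          refine closure_minimal ?_ isClosed_closedBall
          intro w hw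
          by_contra h
          exact hw (hηR w (by simpa using h))
        have := this hz'
        simp at this; linarith
      have h0 : fderiv ℝ η z = 0 := image_eq_zero_of_notMem_tsupport
        (fun h => this (tsupport_fderiv_subset ℝ h))
      simp [pd, h0]
    choose C hC0 hC using hpd
    obtain ⟨B, hB⟩ := (tsupport_subset_closedBall hηR).exists_bound_of_continuous hη.continuous
    have hB0 : 0 ≤ B := (norm_nonneg _).trans (hB 0)
    have hS0 : 0 ≤ ∑ j, C j := Finset.sum_nonneg fun j _ => hC0 j
    refine ⟨B + 2 * ((∑ j, C j) * 2 ^ m), by positivity, ?_⟩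
    intro k z
    cases k with
    | zero => 
      simp only [iterS, pow_zero, mul_one]
      refine (hB z).trans ?_
      have : 0 ≤ (∑ j, C j) * 2 ^ m := by positivity
      linarith
    | succ k =>
      obtain ⟨h1, h2⟩ := iterS_props hψ hψ1 hη hηR k
      have hp : (0 : ℝ) < (1 / 2 : ℝ) ^ k := by positivity
      set g := iterS ψ η k with hg
      have hgrad : ∀ y, ‖fderiv ℝ g y‖ ≤ (∑ j, C j) * (A / 2 ^ m) ^ k := by
        intro y
        refine (norm_fderiv_le_sum _ _).trans ?_
        rw [Finset.sum_mul]
        refine Finset.sum_le_sum fun j _ => ?_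
        rw [hg, iterS_pd hψ hψ1 hη hηR]
        exact hC j k y
      set D := (∑ j, C j) * (A / 2 ^ m) ^ k with hD
      have hD0 : 0 ≤ D := by positivity
      have hlip : ∀ a b, |g a - g b| ≤ D * ‖a - b‖ := by
        intro a b
        exact Convex.norm_image_sub_le_of_norm_fderiv_le (𝕜 := ℝ) (s := univ)
          (fun x _ => h1.differentiable (by simp) x) (fun x _ => hgrad x) convex_univ
          (mem_univ b) (mem_univ a)
      have e : iterS ψ η (k+1) z = ∫ w, ψ w * (g z - g (z - (1 / 2 : ℝ) ^ k • w)) := by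
        simp only [iterS]
        rw [← hg]
        have : ∫ w, ψ w * (g z - g (z - (1 / 2 : ℝ) ^ k • w))
          = (∫ w, ψ w * g z) - ∫ w, ψ w * g (z - (1 / 2 : ℝ) ^ k • w) := by
          rw [← integral_sub]
          · congr 1; ext w; ring
          · exact integrable_mul_hcs hψ.continuous hψcs (by fun_prop)
          · have := h1.continuous
            exact integrable_mul_hcs hψ.continuous hψcs (by fun_prop)
        rw [this, integral_mul_const, hψint, one_mul]; rfl
      have hb : |iterS ψ η (k+1) z| ≤ (∫ w, |ψ w|) * (D * (1 / 2 : ℝ) ^ k) := by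
        rw [e, ← integral_mul_const, ← Real.norm_eq_abs]
        refine norm_integral_le_of_norm_le
          ((hψ.continuous.abs.integrable_of_hasCompactSupport hψcs.norm).mul_const _) ?_
        refine Filter.Eventually.of_forall fun w => ?_
        rw [norm_mul, Real.norm_eq_abs, Real.norm_eq_abs]
        by_cases hw : 1 ≤ ‖w‖
        · simp [hψ1 w hw]
        · push Not at hw
          gcongr
          refine (hlip _ _).trans ?_
          rw [_root_.sub_sub_cancel, norm_smul, Real.norm_of_nonneg hp.le]
          gcongr
          nlinarith
      refine hb.trans ?_
      have hle : (∫ w, |ψ w|) ≤ A := by linarith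
      calc (∫ w, |ψ w|) * (D * (1 / 2 : ℝ) ^ k) ≤ A * (D * (1 / 2 : ℝ) ^ k) := by gcongr
        _ = 2 * ((∑ j, C j) * 2 ^ m) * (A / 2 ^ (m + 1)) ^ (k+1) := by
          rw [hD]
          have : A / 2 ^ (m+1) = (A / 2^m) * (1/2) := by
            rw [pow_succ]; field_simp
          rw [this, mul_pow, pow_succ (A / 2^m), pow_succ (1/2 : ℝ)]
          field_simp
        _ ≤ _ := by
          gcongr
          linarith

/-- elementary inequality for the polynomial weights -/
lemma weight_le {a R t : ℝ} (ha : 0 ≤ a) (hR : 0 ≤ R) (N k : ℕ) {b : ℝ} (hb0 : 0 ≤ b)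
    (ht : 0 < t) (hb : b ≤ a + t * R) :
    (1 + b / ((1 / 2 : ℝ) ^ k * t)) ^ N ≤ (2 ^ N) ^ k * (1 + R) ^ N * (1 + a / t) ^ N := by
  rw [← pow_mul, mul_comm N k, pow_mul, ← mul_pow, ← mul_pow]
  refine pow_le_pow_left₀ (by positivity) ?_ N
  have h1 : b / ((1 / 2 : ℝ) ^ k * t) = 2 ^ k * (b / t) := by
    rw [one_div, inv_pow]; field_simp
  have h2 : b / t ≤ a / t + R := by
    rw [div_le_iff₀ ht, add_mul, div_mul_cancel₀ _ ht.ne']; linarith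
  have h3 : (1 : ℝ) ≤ 2 ^ k := one_le_pow₀ (by norm_num)
  have h4 : 0 ≤ a / t := by positivity
  rw [h1]
  have h5 : 2 ^ k * (b / t) ≤ 2 ^ k * (a / t + R) := by gcongr
  have h6 : 0 ≤ 2 ^ k * (R * (a / t)) := by positivity
  nlinarith

lemma repro {ψ : E → ℝ} (hψ : ContDiff ℝ (⊤ : ℕ∞) ψ)
    (hψ1 : ∀ z, 1 ≤ ‖z‖ → ψ z = 0) (hψint : ∫ x, ψ x = 1) (N : ℕ)
    {η : E → ℝ} (hη : ContDiff ℝ (⊤ : ℕ∞) η) (hηc : HasCompactSupport η) :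
    ∃ C : ℝ, 0 ≤ C ∧ ∀ (f : E → ℝ) (_ : Continuous f) (B : ℝ) (_ : ∀ z, |f z| ≤ B) (x : E) (τ : ℝ),
      0 ≤ τ → (∀ y t, 0 < t → |cv ψ f t y| ≤ τ * (1 + ‖x - y‖ / t) ^ N) →
      ∀ y t, 0 < t → |cv η f t y| ≤ C * τ * (1 + ‖x - y‖ / t) ^ N := by
  have hψcs : HasCompactSupport ψ := tsupport_subset_closedBall (R := 1) fun z hz => hψ1 z hz.le
  have hI : 0 ≤ ∫ w, |ψ w| := integral_nonneg fun _ => abs_nonneg _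
  obtain ⟨R, hR0, hηR⟩ : ∃ R : ℝ, 0 ≤ R ∧ ∀ z, R < ‖z‖ → η z = 0 := by
    obtain ⟨R, hR0, hR⟩ := hηc.isCompact.isBounded.subset_closedBall_lt 0 0
    refine ⟨R, hR0.le, fun z hz => image_eq_zero_of_notMem_tsupport fun h => ?_⟩
    have := hR h
    simp at this; linarith
  set A := 1 + ∫ w, |ψ w| with hA
  obtain ⟨m, hm⟩ : ∃ m : ℕ, A * 2 ^ N * 2 < 2 ^ m := pow_unbounded_of_one_lt _ (by norm_num)
  obtain ⟨C, hC0, hC⟩ := iterS_bound hψ hψ1 hψint m hη hηR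
  rw [← hA] at hC
  have hA1 : 1 ≤ A := by linarith
  have hA2 : A / 2 ^ m * 2 ^ N ≤ 1 / 2 := by
    rw [div_mul_eq_mul_div, div_le_iff₀ (by positivity)]; linarith
  have hA3 : A / 2 ^ m ≤ 1 / 2 := by
    have h1 : (1 : ℝ) ≤ 2 ^ N := one_le_pow₀ (by norm_num)
    have h2 : 0 ≤ A / 2 ^ m := by positivity
    nlinarith
  set V := (volume : Measure E).real (closedBall 0 (R + 2)) with hV
  have hV0 : 0 ≤ V := measureReal_nonneg
  have hsupp : ∀ k z, R + 2 < ‖z‖ → iterS ψ η k z = 0 := by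
    intro k z hz
    refine (iterS_props hψ hψ1 hη hηR k).2 z ?_
    have : (0 : ℝ) < (1 / 2 : ℝ) ^ k := by positivity
    linarith
  have hKc : ∀ k, Continuous (iterS ψ η k) := fun k =>
    (iterS_props hψ hψ1 hη hηR k).1.continuous
  have hKs : ∀ k, HasCompactSupport (iterS ψ η k) := fun k => tsupport_subset_closedBall (hsupp k)
  -- integral estimate
  have hintg : ∀ (k : ℕ) (g : E → ℝ) (M : ℝ), (∀ w, ‖w‖ ≤ R + 2 → |g w| ≤ M) →
      |∫ w, iterS ψ η k w * g w| ≤ C * (A / 2 ^ m) ^ k * M * V := by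
    intro k g M hM
    have e : ∫ w, iterS ψ η k w * g w = ∫ w in closedBall 0 (R + 2), iterS ψ η k w * g w := by
      rw [setIntegral_eq_integral_of_forall_compl_eq_zero]
      intro w hw
      rw [hsupp k w (by simpa using hw), zero_mul]
    rw [e, ← Real.norm_eq_abs]
    refine norm_setIntegral_le_of_norm_le_const (isCompact_closedBall _ _).measure_lt_top ?_
    intro w hw
    rw [norm_mul]
    have : 0 ≤ M := (abs_nonneg _).trans (hM w (by simpa using hw))
    exact mul_le_mul (hC k w) (hM w (by simpa using hw)) (norm_nonneg _) (by positivity)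
  refine ⟨2 * (C * (1 + (R + 2)) ^ N * V), by positivity, ?_⟩
  intro f hf B hB x τ hτ hyp y t ht
  set W := (1 + ‖x - y‖ / t) ^ N with hW
  have hW0 : 0 ≤ W := by positivity
  have hstep : ∀ k, |cv (cv ψ (iterS ψ η k) ((1 / 2 : ℝ) ^ k)) f t y|
      ≤ (C * (1 + (R + 2)) ^ N * V) * τ * W * (1 / 2) ^ k := by
    intro k
    rw [cv_comp (hKc k) (hKs k) hψ.continuous hψcs hf]
    refine (hintg k _ (τ * ((2 ^ N) ^ k * (1 + (R + 2)) ^ N * W)) ?_).trans ?_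
    · intro w hw
      refine (hyp _ _ (by positivity)).trans ?_
      refine mul_le_mul_of_nonneg_left ?_ hτ
      refine weight_le (norm_nonneg _) (by positivity) N k (norm_nonneg _) ht ?_
      have : x - (y - t • w) = (x - y) + t • w := by abel
      rw [this]
      refine (norm_add_le _ _).trans ?_
      rw [norm_smul, Real.norm_of_nonneg ht.le]
      gcongr
    · calc C * (A / 2 ^ m) ^ k * (τ * ((2 ^ N) ^ k * (1 + (R + 2)) ^ N * W)) * V
          = (C * (1 + (R + 2)) ^ N * V) * τ * W * (A / 2 ^ m * 2 ^ N) ^ k := by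
            rw [mul_pow]; ring
        _ ≤ _ := by gcongr
  have htel : ∀ k, |cv η f t y| ≤ (C * (1 + (R + 2)) ^ N * V) * τ * W * (2 * (1 - (1 / 2) ^ k))
      + |cv (iterS ψ η k) f t y| := by
    intro k
    induction k with
    | zero => simp [iterS]
    | succ k ih =>
      have e : cv (iterS ψ η (k+1)) f t y = cv (iterS ψ η k) f t y -
          cv (cv ψ (iterS ψ η k) ((1 / 2 : ℝ) ^ k)) f t y := by
        have hcc : Continuous (cv ψ (iterS ψ η k) ((1 / 2 : ℝ) ^ k)) :=
          cv_continuous hψ.continuous hψcs (hKc k) (by positivity)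
        have hcs : HasCompactSupport (cv ψ (iterS ψ η k) ((1 / 2 : ℝ) ^ k)) := by
          have : cv ψ (iterS ψ η k) ((1 / 2 : ℝ) ^ k)
            = fun z => iterS ψ η k z - iterS ψ η (k+1) z := by
            ext z; simp [iterS]
          rw [this]
          exact tsupport_subset_closedBall (R := R + 2) fun z hz => by
            rw [hsupp k z hz, hsupp (k+1) z hz, sub_zero]
        rw [cv, cv, cv, ← integral_sub]
        · congr 1; ext w; simp only [iterS]; ring
        · exact integrable_mul_hcs (hKc k) (hKs k) (by fun_prop)
        · exact integrable_mul_hcs hcc hcs (by fun_prop)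
      have h1 := hstep k
      have h2 : |cv (iterS ψ η k) f t y| ≤ |cv (iterS ψ η (k+1)) f t y| +
          |cv (cv ψ (iterS ψ η k) ((1 / 2 : ℝ) ^ k)) f t y| := by
        rw [e]
        have := abs_add_le (cv (iterS ψ η k) f t y -
          cv (cv ψ (iterS ψ η k) ((1 / 2 : ℝ) ^ k)) f t y)
          (cv (cv ψ (iterS ψ η k) ((1 / 2 : ℝ) ^ k)) f t y)
        rwa [sub_add_cancel] at this
      rw [pow_succ]
      linarith
  have hlim : Filter.Tendsto (fun k : ℕ => (C * (1 + (R + 2)) ^ N * V) * τ * W * 2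
      + C * (1 / 2 : ℝ) ^ k * B * V) Filter.atTop
      (nhds ((C * (1 + (R + 2)) ^ N * V) * τ * W * 2 + C * 0 * B * V)) := by
    have := tendsto_pow_atTop_nhds_zero_of_lt_one (r := (1/2 : ℝ)) (by norm_num) (by norm_num)
    exact tendsto_const_nhds.add (((this.const_mul C).mul_const B).mul_const V)
  have hB0 : 0 ≤ B := (abs_nonneg _).trans (hB 0)
  have := ge_of_tendsto' (b := |cv η f t y|) hlim ?_
  · refine this.trans (le_of_eq ?_); ring
  · intro k
    refine (htel k).trans ?_
    have h1 : |cv (iterS ψ η k) f t y| ≤ C * (A / 2 ^ m) ^ k * B * V :=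
      hintg k _ B fun w _ => hB _
    have h2 : C * (A / 2 ^ m) ^ k * B * V ≤ C * (1 / 2 : ℝ) ^ k * B * V := by gcongr
    have h3 : (C * (1 + (R + 2)) ^ N * V) * τ * W * (2 * (1 - (1 / 2) ^ k))
      ≤ (C * (1 + (R + 2)) ^ N * V) * τ * W * 2 := by
      refine mul_le_mul_of_nonneg_left ?_ (by positivity)
      have : (0 : ℝ) < (1 / 2 : ℝ) ^ k := by positivity
      linarith
    linarith

end

section
variable {n : ℕ}
local notation "E" => EuclideanSpace ℝ (Fin n)

/-- uncentred Hardy-Littlewood maximal function -/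
def HLmax (g : E → ℝ≥0∞) (x : E) : ℝ≥0∞ :=
  ⨆ (z : E) (r : {r : ℝ // 0 < r}) (_ : x ∈ ball z r.1),
    (volume (ball z r.1))⁻¹ * ∫⁻ y in ball z r.1, g y

lemma lt_HLmax_iff (g : E → ℝ≥0∞) (x : E) (a : ℝ≥0∞) :
    a < HLmax g x ↔ ∃ z r, 0 < r ∧ x ∈ ball z r ∧
      a < (volume (ball z r))⁻¹ * ∫⁻ y in ball z r, g y := by
  simp only [HLmax, lt_iSup_iff, Subtype.exists]
  constructor
  · rintro ⟨z, r, hr, hx, h⟩; exact ⟨z, r, hr, hx, h⟩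
  · rintro ⟨z, r, hr, hx, h⟩; exact ⟨z, r, hr, hx, h⟩

lemma le_HLmax (g : E → ℝ≥0∞) {x z : E} {r : ℝ} (hr : 0 < r) (hx : x ∈ ball z r) :
    (volume (ball z r))⁻¹ * ∫⁻ y in ball z r, g y ≤ HLmax g x := by
  unfold HLmax
  exact le_iSup_of_le z (le_iSup_of_le ⟨r, hr⟩ (le_iSup_of_le hx le_rfl))

lemma isOpen_HLmax (g : E → ℝ≥0∞) (a : ℝ≥0∞) : IsOpen {x | a < HLmax g x} := by
  rw [isOpen_iff_forall_mem_open]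
  intro x hx
  obtain ⟨z, r, hr, hxb, h⟩ := (lt_HLmax_iff g x a).1 hx
  refine ⟨ball z r, fun y hy => (lt_HLmax_iff g y a).2 ⟨z, r, hr, hy, h⟩, isOpen_ball, hxb⟩

lemma measurable_HLmax (g : E → ℝ≥0∞) : Measurable (HLmax g) :=
  measurable_of_Ioi fun a => (isOpen_HLmax g a).measurableSet

lemma vol_ball (z : E) {r : ℝ} (hr : 0 < r) :
    volume (ball z r) = ENNReal.ofReal (r ^ n) * volume (ball (0 : E) 1) := by
  rw [Measure.addHaar_ball_of_pos _ _ hr, finrank_euclideanSpace, Fintype.card_fin]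

lemma v_pos : volume (ball (0 : E) 1) ≠ 0 := (measure_ball_pos _ _ one_pos).ne'
lemma v_fin : volume (ball (0 : E) 1) ≠ ⊤ := measure_ball_lt_top.ne

lemma HL_weak (hn : 1 ≤ n) (g : E → ℝ≥0∞) {a : ℝ≥0∞} (ha : a ≠ 0) (ha' : a ≠ ⊤) :
    volume {x | a < HLmax g x} ≤ 4 ^ n * a⁻¹ * ∫⁻ y, g y := by
  by_cases hI : ∫⁻ y, g y = ⊤
  · rw [hI, ENNReal.mul_top]
    · exact le_top
    · simp [ha']
  set t : Set (E × ℝ) := {p | 0 < p.2 ∧ a * volume (ball p.1 p.2) < ∫⁻ y in ball p.1 p.2, g y}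
  set v := volume (ball (0 : E) 1) with hv
  have hav : a * v ≠ 0 := mul_ne_zero ha v_pos
  have hav' : a * v ≠ ⊤ := ENNReal.mul_ne_top ha' v_fin
  have hbd : ∀ p ∈ t, p.2 ≤ ((a * v)⁻¹ * ∫⁻ y, g y).toReal + 1 := by
    rintro ⟨z, r⟩ ⟨hr, h⟩
    simp only at hr h ⊢
    have hfin : (a * v)⁻¹ * ∫⁻ y, g y ≠ ⊤ := ENNReal.mul_ne_top (ENNReal.inv_ne_top.2 hav) hI
    by_cases hr1 : r ≤ 1
    · have : 0 ≤ ((a * v)⁻¹ * ∫⁻ y, g y).toReal := ENNReal.toReal_nonneg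
      linarith
    push Not at hr1
    have h1 : r ≤ r ^ n := le_self_pow₀ hr1.le (by omega)
    have h2 : ENNReal.ofReal (r ^ n) ≤ (a * v)⁻¹ * ∫⁻ y, g y := by
      rw [vol_ball z hr] at h
      rw [← ENNReal.div_eq_inv_mul, ENNReal.le_div_iff_mul_le (Or.inl hav) (Or.inl hav')]
      calc ENNReal.ofReal (r ^ n) * (a * v) = a * (ENNReal.ofReal (r^n) * v) := by ring
        _ ≤ ∫⁻ y in ball z r, g y := h.le
        _ ≤ _ := setLIntegral_le_lintegral _ _
    have h3 := (ENNReal.ofReal_le_iff_le_toReal hfin).1 h2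
    linarith
  obtain ⟨u, hut, hdisj, hcov⟩ := Vitali.exists_disjoint_subfamily_covering_enlargement_ball
    t Prod.fst Prod.snd _ hbd 4 (by norm_num)
  have hcount : u.Countable := by
    refine hdisj.countable_of_isOpen (fun _ _ => isOpen_ball) ?_
    intro p hp
    exact nonempty_ball.2 (hut hp).1
  have hsub : {x | a < HLmax g x} ⊆ ⋃ p ∈ u, ball p.1 (4 * p.2) := by
    intro x hx
    obtain ⟨z, r, hr, hxb, h⟩ := (lt_HLmax_iff g x a).1 hx
    have : (z, r) ∈ t := by
      refine ⟨hr, ?_⟩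
      have h0 : volume (ball z r) ≠ 0 := (measure_ball_pos _ _ hr).ne'
      have h1 : volume (ball z r) ≠ ⊤ := measure_ball_lt_top.ne
      rw [← ENNReal.div_eq_inv_mul] at h
      exact (ENNReal.lt_div_iff_mul_lt (Or.inl h0) (Or.inl h1)).1 h
    obtain ⟨b, hb, hb'⟩ := hcov _ this
    exact mem_biUnion hb (hb' hxb)
  calc volume {x | a < HLmax g x} ≤ volume (⋃ p ∈ u, ball p.1 (4 * p.2)) := measure_mono hsub
    _ ≤ ∑' p : u, volume (ball p.1.1 (4 * p.1.2)) := measure_biUnion_le _ hcount _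
    _ ≤ ∑' p : u, 4 ^ n * a⁻¹ * ∫⁻ y in ball p.1.1 p.1.2, g y := by
      refine ENNReal.tsum_le_tsum fun p => ?_
      have hp := hut p.2
      have hp1 : 0 < p.1.2 := hp.1
      rw [vol_ball _ (by positivity), mul_pow, ENNReal.ofReal_mul (by positivity), mul_assoc,
        ← vol_ball p.1.1 hp1, mul_assoc, ENNReal.ofReal_pow (by norm_num)]
      norm_num
      gcongr
      rw [← ENNReal.div_eq_inv_mul, ENNReal.le_div_iff_mul_le (Or.inl ha) (Or.inl ha'), mul_comm]
      exact hp.2.le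
    _ = 4 ^ n * a⁻¹ * ∑' p : u, ∫⁻ y in ball p.1.1 p.1.2, g y := ENNReal.tsum_mul_left
    _ = 4 ^ n * a⁻¹ * ∫⁻ y in ⋃ p ∈ u, ball p.1 p.2, g y := by
      rw [lintegral_biUnion hcount (fun _ _ => measurableSet_ball) hdisj]
    _ ≤ _ := by gcongr; exact Measure.restrict_le_self

lemma HL_le_const (g : E → ℝ≥0∞) {B : ℝ≥0∞} (hB : ∀ x, g x ≤ B) (x : E) : HLmax g x ≤ B := by
  unfold HLmax
  refine iSup_le fun z => iSup_le fun r => iSup_le fun _ => ?_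
  have h0 : volume (ball z r.1) ≠ 0 := (measure_ball_pos _ _ r.2).ne'
  have h1 : volume (ball z r.1) ≠ ⊤ := measure_ball_lt_top.ne
  rw [← ENNReal.div_eq_inv_mul, ENNReal.div_le_iff h0 h1]
  calc ∫⁻ y in ball z r.1, g y ≤ ∫⁻ y in ball z r.1, B := lintegral_mono fun y => hB y
    _ = _ := by simp

lemma HL_weak' (hn : 1 ≤ n) {g : E → ℝ≥0∞} {a : ℝ≥0∞} (ha : a ≠ 0) (ha' : a ≠ ⊤) :
    volume {x | a < HLmax g x} ≤
      2 * 4 ^ n * a⁻¹ * ∫⁻ y, {y | a / 2 < g y}.indicator g y := by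
  have hsub : {x | a < HLmax g x} ⊆
      {x | a / 2 < HLmax ({y | a / 2 < g y}.indicator g) x} := by
    intro x hx
    obtain ⟨z, r, hr, hxb, h⟩ := (lt_HLmax_iff g x a).1 hx
    refine (lt_HLmax_iff _ x _).2 ⟨z, r, hr, hxb, ?_⟩
    have h0 : volume (ball z r) ≠ 0 := (measure_ball_pos _ _ hr).ne'
    have h1 : volume (ball z r) ≠ ⊤ := measure_ball_lt_top.ne
    have h2 : ∫⁻ y in ball z r, g y ≤
        a / 2 * volume (ball z r) + ∫⁻ y in ball z r, {y | a / 2 < g y}.indicator g y := by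
      calc ∫⁻ y in ball z r, g y ≤ ∫⁻ y in ball z r, (a / 2 + {y | a / 2 < g y}.indicator g y) := by
            refine lintegral_mono fun y => ?_
            by_cases hy : a / 2 < g y
            · rw [indicator_of_mem (by exact hy)]; exact le_add_self
            · exact (not_lt.1 hy).trans le_self_add
        _ = _ := by
          rw [lintegral_add_left measurable_const]; simp
    by_contra hcon
    push Not at hcon
    have h3 : (volume (ball z r))⁻¹ * ∫⁻ y in ball z r, g y ≤ a / 2 + a / 2 := by
      calc _ ≤ (volume (ball z r))⁻¹ * (a / 2 * volume (ball z r) +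
            ∫⁻ y in ball z r, {y | a / 2 < g y}.indicator g y) := by gcongr
        _ = a / 2 * ((volume (ball z r))⁻¹ * volume (ball z r)) + (volume (ball z r))⁻¹ *
            ∫⁻ y in ball z r, {y | a / 2 < g y}.indicator g y := by ring
        _ ≤ a / 2 + a / 2 := by
          rw [ENNReal.inv_mul_cancel h0 h1, mul_one]
          gcongr
    rw [ENNReal.add_halves] at h3
    exact absurd h (not_lt.2 h3)
  refine (measure_mono hsub).trans ((HL_weak hn _ (ENNReal.half_pos ha).ne' 
    (ENNReal.div_ne_top ha' (by norm_num))).trans (le_of_eq ?_))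
  rw [ENNReal.inv_div (Or.inl (by norm_num)) (Or.inl (by norm_num)), ENNReal.div_eq_inv_mul]
  ring

lemma lint_rpow {s : ℝ} (hs : 1 < s) {b : ℝ} (hb : 0 ≤ b) :
    ∫⁻ t in Ioc 0 b, ENNReal.ofReal (t ^ (s - 2)) = ENNReal.ofReal (b ^ (s - 1) / (s - 1)) := by
  have hintg : IntervalIntegrable (fun t : ℝ => t ^ (s - 2)) volume 0 b :=
    intervalIntegral.intervalIntegrable_rpow' (by linarith)
  rw [← ofReal_integral_eq_lintegral_ofReal]
  · rw [← intervalIntegral.integral_of_le hb, integral_rpow (Or.inl (by linarith))]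
    have : s - 2 + 1 = s - 1 := by ring
    rw [this, Real.zero_rpow (by linarith), sub_zero]
  · exact (intervalIntegrable_iff_integrableOn_Ioc_of_le hb).1 hintg
  · refine (ae_restrict_iff' measurableSet_Ioc).2 (Filter.Eventually.of_forall fun t ht => ?_)
    exact Real.rpow_nonneg ht.1.le _

lemma HL_strong (hn : 1 ≤ n) {s : ℝ} (hs : 1 < s) : ∃ C : ℝ≥0∞, C ≠ ⊤ ∧
    ∀ g : E → ℝ≥0∞, Measurable g → ∀ B : ℝ≥0∞, B ≠ ⊤ → (∀ x, g x ≤ B) →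
    ∫⁻ x, HLmax g x ^ s ≤ C * ∫⁻ x, g x ^ s := by
  refine ⟨ENNReal.ofReal s * (2 * 4 ^ n) * ENNReal.ofReal (2 ^ (s - 1) / (s - 1)), ?_, ?_⟩
  · refine ENNReal.mul_ne_top (ENNReal.mul_ne_top ENNReal.ofReal_ne_top ?_) ENNReal.ofReal_ne_top
    exact ENNReal.mul_ne_top (by norm_num) (ENNReal.pow_ne_top (by norm_num))
  intro g hg B hB hgB
  have hfin : ∀ x, HLmax g x ≠ ⊤ := fun x => ((HL_le_const g hgB x).trans_lt hB.lt_top).ne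
  have hgfin : ∀ x, g x ≠ ⊤ := fun x => ((hgB x).trans_lt hB.lt_top).ne
  have h1 : ∫⁻ x, HLmax g x ^ s = ∫⁻ x, ENNReal.ofReal ((HLmax g x).toReal ^ s) := by
    refine lintegral_congr fun x => ?_
    rw [← ENNReal.ofReal_rpow_of_nonneg ENNReal.toReal_nonneg (by linarith),
      ENNReal.ofReal_toReal (hfin x)]
  rw [h1, lintegral_rpow_eq_lintegral_meas_lt_mul volume
    (Filter.Eventually.of_forall fun x => ENNReal.toReal_nonneg)
    (measurable_HLmax g).ennreal_toReal.aemeasurable (by linarith)]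
  have hmeas : Measurable (fun p : ℝ × E => {y | ENNReal.ofReal p.1 / 2 < g y}.indicator g p.2
      * ENNReal.ofReal (p.1 ^ (s - 2))) := by
    refine Measurable.mul ?_ (by fun_prop)
    have : (fun p : ℝ × E => {y | ENNReal.ofReal p.1 / 2 < g y}.indicator g p.2)
      = {p : ℝ × E | ENNReal.ofReal p.1 / 2 < g p.2}.indicator (fun p => g p.2) := by
      ext p; simp [indicator]
    rw [this]
    exact Measurable.indicator (by fun_prop) (measurableSet_lt (by fun_prop) (by fun_prop))
  have h2 : ∫⁻ t in Ioi (0 : ℝ), volume {x | t < (HLmax g x).toReal} * ENNReal.ofReal (t ^ (s - 1))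
      ≤ ∫⁻ t in Ioi (0 : ℝ), 2 * 4 ^ n * ∫⁻ y, {y | ENNReal.ofReal t / 2 < g y}.indicator g y
        * ENNReal.ofReal (t ^ (s - 2)) := by
    refine setLIntegral_mono' measurableSet_Ioi fun t ht => ?_
    have ht : (0 : ℝ) < t := ht
    have e : {x | t < (HLmax g x).toReal} = {x | ENNReal.ofReal t < HLmax g x} := by
      ext x
      exact (ENNReal.ofReal_lt_iff_lt_toReal ht.le (hfin x)).symm
    rw [e, lintegral_mul_const' _ _ ENNReal.ofReal_ne_top]
    refine (mul_le_mul_left (HL_weak' hn (by simpa using ht) ENNReal.ofReal_ne_top) _).trans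
      (le_of_eq ?_)
    have e2 : ENNReal.ofReal (t ^ (s - 2)) = (ENNReal.ofReal t)⁻¹ * ENNReal.ofReal (t ^ (s - 1)) := by
      rw [← ENNReal.ofReal_inv_of_pos ht, ← ENNReal.ofReal_mul (by positivity)]
      congr 1
      rw [← Real.rpow_neg_one, ← Real.rpow_add ht]
      congr 1; ring
    rw [e2]; ring
  have h3 : ∀ y, ∫⁻ t in Ioi (0 : ℝ), {y | ENNReal.ofReal t / 2 < g y}.indicator g y
        * ENNReal.ofReal (t ^ (s - 2)) ≤ ENNReal.ofReal (2 ^ (s - 1) / (s - 1)) * g y ^ s := by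
    intro y
    set b := (g y).toReal with hb
    have hgb : g y = ENNReal.ofReal b := (ENNReal.ofReal_toReal (hgfin y)).symm
    have hb0 : 0 ≤ b := ENNReal.toReal_nonneg
    calc _ ≤ ∫⁻ t in Ioi (0 : ℝ), (Ioc 0 (2 * b)).indicator
            (fun t => g y * ENNReal.ofReal (t ^ (s - 2))) t := by
          refine setLIntegral_mono' measurableSet_Ioi fun t ht => ?_
          have ht : (0 : ℝ) < t := ht
          by_cases hy : ENNReal.ofReal t / 2 < g y
          · have : t ∈ Ioc 0 (2 * b) := by
              refine ⟨ht, ?_⟩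
              rw [hgb] at hy
              have h4 := (ENNReal.div_lt_iff (Or.inl (by norm_num)) (Or.inl (by norm_num))).1 hy
              have h5 : ENNReal.ofReal b * 2 = ENNReal.ofReal (b * 2) := by
                rw [ENNReal.ofReal_mul hb0]; norm_num
              rw [h5] at h4
              have := (ENNReal.ofReal_lt_ofReal_iff_of_nonneg ht.le).1 h4
              linarith
            rw [indicator_of_mem this, indicator_of_mem (by exact hy)]
          · rw [indicator_of_notMem (by exact hy), zero_mul]; exact bot_le
      _ ≤ ∫⁻ t, (Ioc 0 (2 * b)).indicator
            (fun t => g y * ENNReal.ofReal (t ^ (s - 2))) t := setLIntegral_le_lintegral _ _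
      _ = g y * ENNReal.ofReal ((2 * b) ^ (s - 1) / (s - 1)) := by
          rw [lintegral_indicator measurableSet_Ioc, lintegral_const_mul' _ _ (hgfin y),
            lint_rpow hs (by positivity)]
      _ = _ := by
          rw [hgb, ENNReal.ofReal_rpow_of_nonneg hb0 (by linarith), ← ENNReal.ofReal_mul hb0,
            ← ENNReal.ofReal_mul]
          · congr 1
            rw [Real.mul_rpow (by norm_num) hb0]
            rcases hb0.eq_or_lt with h | h
            · rw [← h, Real.zero_rpow (by linarith : s ≠ 0)]; simp
            · have : b ^ s = b * b ^ (s - 1) := by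
                conv_lhs => rw [show s = 1 + (s - 1) by ring, Real.rpow_add h, Real.rpow_one]
              rw [this]; ring
          · have : 0 < s - 1 := by linarith
            positivity
  calc _ ≤ ENNReal.ofReal s * ∫⁻ t in Ioi (0 : ℝ), 2 * 4 ^ n *
        ∫⁻ y, {y | ENNReal.ofReal t / 2 < g y}.indicator g y * ENNReal.ofReal (t ^ (s - 2)) := by
        gcongr
    _ = ENNReal.ofReal s * (2 * 4 ^ n * ∫⁻ y, ∫⁻ t in Ioi (0 : ℝ),
        {y | ENNReal.ofReal t / 2 < g y}.indicator g y * ENNReal.ofReal (t ^ (s - 2))) := by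
        rw [lintegral_const_mul' _ _ (ENNReal.mul_ne_top (by norm_num)
          (ENNReal.pow_ne_top (by norm_num)))]
        rw [lintegral_lintegral_swap hmeas.aemeasurable]
    _ ≤ ENNReal.ofReal s * (2 * 4 ^ n * ∫⁻ y, ENNReal.ofReal (2 ^ (s - 1) / (s - 1)) * g y ^ s) := by
        gcongr with y
        exact h3 y
    _ = _ := by
        rw [lintegral_const_mul' _ _ ENNReal.ofReal_ne_top]; ring

end

section
variable {n : ℕ}
local notation "E" => EuclideanSpace ℝ (Fin n)

/-- tangential maximal function -/
def Tmax (N : ℕ) (ψ f : E → ℝ) (x : E) : ℝ≥0∞ :=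
  ⨆ (y : E) (t : {t : ℝ // 0 < t}), ENNReal.ofReal (|cv ψ f t.1 y| / (1 + ‖x - y‖ / t.1) ^ N)

/-- radial maximal function -/
def Gmax (ψ f : E → ℝ) (x : E) : ℝ≥0∞ :=
  ⨆ (t : {t : ℝ // 0 < t}), ENNReal.ofReal |cv ψ f t.1 x|

lemma measurable_Tmax (N : ℕ) (ψ f : E → ℝ) : Measurable (Tmax N ψ f) := by
  apply LowerSemicontinuous.measurable
  refine lowerSemicontinuous_iSup fun y => lowerSemicontinuous_iSup fun t => ?_
  apply Continuous.lowerSemicontinuous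
  refine ENNReal.continuous_ofReal.comp ?_
  refine Continuous.div (by fun_prop) (by fun_prop) fun x => ?_
  have := t.2
  positivity

lemma measurable_Gmax {ψ f : E → ℝ} (hψ : Continuous ψ) (hψ' : HasCompactSupport ψ)
    (hf : Continuous f) : Measurable (Gmax ψ f) := by
  apply LowerSemicontinuous.measurable
  refine lowerSemicontinuous_iSup fun t => ?_
  apply Continuous.lowerSemicontinuous
  exact ENNReal.continuous_ofReal.comp (cv_continuous hψ hψ' hf t.2).abs

lemma Gmax_le {ψ f : E → ℝ} (hψ : Continuous ψ) (hψ' : HasCompactSupport ψ)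
    {B : ℝ} (hB : ∀ z, |f z| ≤ B) (x : E) :
    Gmax ψ f x ≤ ENNReal.ofReal ((∫ w, |ψ w|) * B) :=
  iSup_le fun _ => ENNReal.ofReal_le_ofReal (abs_cv_le hψ hψ' hB _ _)

lemma Tmax_le {ψ f : E → ℝ} (hψ : Continuous ψ) (hψ' : HasCompactSupport ψ)
    {B : ℝ} (hB : ∀ z, |f z| ≤ B) (N : ℕ) (x : E) :
    Tmax N ψ f x ≤ ENNReal.ofReal ((∫ w, |ψ w|) * B) := by
  refine iSup_le fun y => iSup_le fun t => ENNReal.ofReal_le_ofReal ?_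
  refine (div_le_self (abs_nonneg _) ?_).trans (abs_cv_le hψ hψ' hB _ _)
  have := t.2
  exact one_le_pow₀ (by simp; positivity)

lemma Tmax_adm {ψ f : E → ℝ} (N : ℕ) {x : E} (hfin : Tmax N ψ f x ≠ ⊤) (y : E) (t : ℝ)
    (ht : 0 < t) : |cv ψ f t y| ≤ (Tmax N ψ f x).toReal * (1 + ‖x - y‖ / t) ^ N := by
  have h : ENNReal.ofReal (|cv ψ f t y| / (1 + ‖x - y‖ / t) ^ N) ≤ Tmax N ψ f x :=
    le_iSup_of_le y (le_iSup_of_le ⟨t, ht⟩ le_rfl)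
  have h2 := (ENNReal.ofReal_le_iff_le_toReal hfin).1 h
  rwa [div_le_iff₀ (by positivity)] at h2

lemma Tmax_self_improve {ψ : E → ℝ} (hψ : ContDiff ℝ (⊤ : ℕ∞) ψ)
    (hψ1 : ∀ z, 1 ≤ ‖z‖ → ψ z = 0) (hψint : ∫ x, ψ x = 1) (N : ℕ) {q : ℝ} (hq : 0 < q)
    (hN : (n : ℝ) ≤ N * q) :
    ∃ C : ℝ≥0∞, C ≠ ⊤ ∧ ∀ (f : E → ℝ) (_ : Continuous f) (B : ℝ) (_ : ∀ z, |f z| ≤ B) (x : E),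
      Tmax N ψ f x ^ q ≤ C * HLmax (fun y => Gmax ψ f y ^ q) x := by
  have hψcs : HasCompactSupport ψ := tsupport_subset_closedBall (R := 1) fun z hz => hψ1 z hz.le
  have hrep := fun j : Fin n => repro hψ hψ1 hψint N
    (pd_contDiff (EuclideanSpace.single j 1) hψ) (pd_hcs (EuclideanSpace.single j 1) hψcs)
  choose C hC0 hC using hrep
  set C1 := ∑ j, C j with hC1
  have hC10 : 0 ≤ C1 := Finset.sum_nonneg fun j _ => hC0 j
  set δ : ℝ := 1 / (4 * (C1 + 1) * 2 ^ N) with hδ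
  have hδ0 : 0 < δ := by positivity
  have h2N : (1 : ℝ) ≤ 2 ^ N := one_le_pow₀ (by norm_num)
  have hδ1 : δ ≤ 1 := by
    rw [hδ, div_le_one (by positivity)]
    nlinarith
  have hδC : δ * (C1 * 2 ^ N) ≤ 1 / 4 := by
    rw [hδ, div_mul_eq_mul_div, one_mul, div_le_iff₀ (by positivity)]
    nlinarith
  refine ⟨ENNReal.ofReal (4 ^ q / δ ^ n), ENNReal.ofReal_ne_top, ?_⟩
  intro f hf B hB x
  have hfin : Tmax N ψ f x ≠ ⊤ :=
    ((Tmax_le hψ.continuous hψcs hB N x).trans_lt ENNReal.ofReal_lt_top).ne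
  set τ := (Tmax N ψ f x).toReal with hτ
  have hTτ : Tmax N ψ f x = ENNReal.ofReal τ := (ENNReal.ofReal_toReal hfin).symm
  have hτ0 : 0 ≤ τ := ENNReal.toReal_nonneg
  rcases hτ0.eq_or_lt with h0 | hpos
  · rw [hTτ, ← h0, ENNReal.ofReal_zero, ENNReal.zero_rpow_of_pos hq]; exact bot_le
  have hlt : ENNReal.ofReal (τ / 2) < Tmax N ψ f x := by
    rw [hTτ]; exact (ENNReal.ofReal_lt_ofReal_iff hpos).2 (by linarith)
  obtain ⟨y, hy⟩ := lt_iSup_iff.1 hlt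
  obtain ⟨⟨t, ht⟩, hyt⟩ := lt_iSup_iff.1 hy
  simp only at hyt
  have hyt' := (ENNReal.ofReal_lt_ofReal_iff_of_nonneg (by positivity)).1 hyt
  set L := 1 + ‖x - y‖ / t with hL
  have hL1 : 1 ≤ L := by rw [hL]; simp; positivity
  rw [lt_div_iff₀ (by positivity)] at hyt'
  have hadm := Tmax_adm (ψ := ψ) (f := f) N hfin
  -- lower bound near y
  have hnear : ∀ y' ∈ ball y (δ * t), τ / 4 * L ^ N ≤ |cv ψ f t y'| := by
    intro y' hy'
    have hgrad : ∀ z ∈ ball y (δ * t), ‖fderiv ℝ (cv ψ f t) z‖ ≤ t⁻¹ * (C1 * τ * (2 ^ N * L ^ N)) := by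
      intro z hz
      refine (norm_fderiv_le_sum _ _).trans ?_
      rw [hC1, Finset.sum_mul, Finset.sum_mul, Finset.mul_sum]
      refine Finset.sum_le_sum fun j _ => ?_
      rw [(cv_hasFDerivAt_left hψ hψcs hf ht z).2, abs_mul, abs_of_pos (inv_pos.2 ht)]
      refine mul_le_mul_of_nonneg_left ?_ (inv_pos.2 ht).le
      refine (hC j f hf B hB x τ hτ0 hadm z t ht).trans ?_
      refine mul_le_mul_of_nonneg_left ?_ (mul_nonneg (hC0 j) hτ0)
      rw [← mul_pow]
      refine pow_le_pow_left₀ (by positivity) ?_ N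
      have hz' : ‖y - z‖ < δ * t := by rw [← dist_eq_norm, dist_comm]; exact hz
      have h3 : ‖x - z‖ ≤ ‖x - y‖ + ‖y - z‖ := norm_sub_le_norm_sub_add_norm_sub _ _ _
      have h4 : ‖x - z‖ / t ≤ ‖x - y‖ / t + δ := by
        rw [div_le_iff₀ ht, add_mul, div_mul_cancel₀ _ ht.ne']; linarith
      have h5 : 0 ≤ ‖x - y‖ / t := by positivity
      rw [hL]; linarith
    have hmv := Convex.norm_image_sub_le_of_norm_fderiv_le (𝕜 := ℝ) (s := ball y (δ * t))
          (fun z _ => (cv_hasFDerivAt_left hψ hψcs hf ht z).1) hgrad (convex_ball _ _)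
          hy' (mem_ball_self (by positivity))
    have hd : ‖y - y'‖ ≤ δ * t := by rw [← dist_eq_norm, dist_comm]; exact (mem_ball.1 hy').le
    have h6 : |cv ψ f t y - cv ψ f t y'| ≤ τ / 4 * L ^ N := by
      calc |cv ψ f t y - cv ψ f t y'| ≤ t⁻¹ * (C1 * τ * (2 ^ N * L ^ N)) * ‖y - y'‖ := hmv
        _ ≤ t⁻¹ * (C1 * τ * (2 ^ N * L ^ N)) * (δ * t) := by gcongr
        _ = δ * (C1 * 2 ^ N) * (τ * L ^ N) := by field_simp
        _ ≤ 1 / 4 * (τ * L ^ N) := by gcongr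
        _ = _ := by ring
    have h7 := abs_sub_abs_le_abs_sub (cv ψ f t y) (cv ψ f t y')
    linarith
  set ρ := t * L with hρ
  have hρ0 : 0 < ρ := by positivity
  have hρ' : ρ = t + ‖x - y‖ := by rw [hρ, hL]; field_simp
  have hsub : ball y (δ * t) ⊆ ball x ρ := by
    refine ball_subset_ball' ?_
    rw [dist_comm, dist_eq_norm, hρ']
    nlinarith
  have hlow : ENNReal.ofReal (δ ^ n * (τ / 4) ^ q) * volume (ball x ρ) ≤
      ∫⁻ y in ball x ρ, Gmax ψ f y ^ q := by
    calc ENNReal.ofReal (δ ^ n * (τ / 4) ^ q) * volume (ball x ρ)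
        = ENNReal.ofReal (δ ^ n * (τ / 4) ^ q * ρ ^ n) * volume (ball (0 : E) 1) := by
          rw [vol_ball _ hρ0, ← mul_assoc, ← ENNReal.ofReal_mul (by positivity)]
      _ ≤ ENNReal.ofReal ((τ / 4 * L ^ N) ^ q * (δ * t) ^ n) * volume (ball (0 : E) 1) := by
          refine mul_le_mul_left (ENNReal.ofReal_le_ofReal ?_) _
          have : L ^ n ≤ (L ^ N) ^ q := by
            rw [← Real.rpow_natCast L N, ← Real.rpow_mul (by positivity), ← Real.rpow_natCast L n]
            exact Real.rpow_le_rpow_of_exponent_le hL1 hN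
          rw [Real.mul_rpow (by positivity) (by positivity), hρ, mul_pow, mul_pow]
          calc δ ^ n * (τ / 4) ^ q * (t ^ n * L ^ n) = (τ / 4) ^ q * L ^ n * (δ ^ n * t ^ n) := by ring
            _ ≤ _ := by gcongr
      _ = ENNReal.ofReal (τ / 4 * L ^ N) ^ q * volume (ball y (δ * t)) := by
          rw [ENNReal.ofReal_mul (by positivity), mul_assoc, ← vol_ball y (by positivity),
            ENNReal.ofReal_rpow_of_nonneg (by positivity) hq.le]
      _ = ∫⁻ z in ball y (δ * t), ENNReal.ofReal (τ / 4 * L ^ N) ^ q := by simp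
      _ ≤ ∫⁻ z in ball y (δ * t), Gmax ψ f z ^ q := by
          refine setLIntegral_mono' measurableSet_ball fun z hz => ?_
          refine ENNReal.rpow_le_rpow ?_ hq.le
          exact (ENNReal.ofReal_le_ofReal (hnear z hz)).trans (le_iSup_of_le ⟨t, ht⟩ le_rfl)
      _ ≤ _ := lintegral_mono_set hsub
  have h0 : volume (ball x ρ) ≠ 0 := (measure_ball_pos _ _ hρ0).ne'
  have h1 : volume (ball x ρ) ≠ ⊤ := measure_ball_lt_top.ne
  have hHL : ENNReal.ofReal (δ ^ n * (τ / 4) ^ q) ≤ HLmax (fun y => Gmax ψ f y ^ q) x := by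
    refine le_trans ?_ (le_HLmax _ hρ0 (mem_ball_self hρ0))
    rw [← ENNReal.div_eq_inv_mul, ENNReal.le_div_iff_mul_le (Or.inl h0) (Or.inl h1)]
    exact hlow
  calc Tmax N ψ f x ^ q = ENNReal.ofReal (4 ^ q / δ ^ n) * ENNReal.ofReal (δ ^ n * (τ / 4) ^ q) := by
        rw [hTτ, ENNReal.ofReal_rpow_of_nonneg hτ0 hq.le, ← ENNReal.ofReal_mul (by positivity),
          Real.div_rpow hτ0 (by norm_num)]
        congr 1
        have : (4 : ℝ) ^ q ≠ 0 := by positivity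
        field_simp
    _ ≤ _ := by gcongr

end

section
variable {n : ℕ}
local notation "E" => EuclideanSpace ℝ (Fin n)

lemma hContent_le {s : ℝ} (hs : 0 < s) {A : Set E} {t : Set E} (ht : t.Countable) (r : E → ℝ)
    (hr : ∀ z ∈ t, 0 < r z) (hA : A ⊆ ⋃ z ∈ t, ball z (r z)) :
    hContent n s A ≤ ∑' z : t, ENNReal.ofReal (r z ^ s) := by
  refine _root_.le_of_forall_pos_le_add fun ε hε => ?_
  obtain ⟨ε', hε', hsum⟩ := ENNReal.exists_pos_sum_of_countable hε.ne' ℕ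
  have := ht.to_subtype
  obtain ⟨e⟩ := nonempty_denumerable (t ⊕ ℕ)
  let e : ℕ ≃ (t ⊕ ℕ) := (Denumerable.eqv (t ⊕ ℕ)).symm
  let X : t ⊕ ℕ → E := Sum.elim (fun z => z.1) (fun _ => 0)
  let ρ : t ⊕ ℕ → ℝ := Sum.elim (fun z => r z.1) (fun k => (ε' k : ℝ) ^ (1 / s))
  have hρ : ∀ i, 0 < ρ i := by
    rintro (z | k)
    · exact hr z.1 z.2
    · exact Real.rpow_pos_of_pos (hε' k) _
  have key : hContent n s A ≤ ∑' k : ℕ, ENNReal.ofReal (ρ (e k) ^ s) := by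
    refine sInf_le ⟨fun k => X (e k), fun k => ρ (e k), fun k => hρ _, ?_, rfl⟩
    intro a ha
    obtain ⟨z, hz, haz⟩ := mem_iUnion₂.1 (hA ha)
    refine mem_iUnion.2 ⟨e.symm (Sum.inl ⟨z, hz⟩), ?_⟩
    simpa [X, ρ] using haz
  refine key.trans ?_
  rw [e.tsum_eq (fun i => ENNReal.ofReal (ρ i ^ s))]
  rw [Summable.tsum_sum ENNReal.summable ENNReal.summable]
  refine add_le_add le_rfl (le_trans ?_ hsum.le)
  refine ENNReal.tsum_le_tsum fun k => ?_
  have : ρ (Sum.inr k) ^ s = ε' k := by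
    simp only [ρ, Sum.elim_inr]
    rw [← Real.rpow_mul (NNReal.coe_nonneg (ε' k)), one_div_mul_cancel hs.ne', Real.rpow_one]
  rw [this]; simp

lemma mv_aux {φ φ' h h' : ℝ → ℝ} {d : ℝ} (hd : 0 ≤ d) (hφ : ∀ t, HasDerivAt φ (φ' t) t)
    (hc : Continuous h) (hh : ∀ t ∈ Ioo 0 d, HasDerivAt h (h' t) t)
    (hle : ∀ t ∈ Ioo 0 d, |φ' t| ≤ h' t) : |φ d - φ 0| ≤ h d - h 0 := by
  have hφc : Continuous φ := continuous_iff_continuousAt.2 fun t => (hφ t).continuousAt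
  have h0 : (0:ℝ) ∈ Icc 0 d := ⟨le_rfl, hd⟩
  have h1 : d ∈ Icc 0 d := ⟨hd, le_rfl⟩
  have m1 : MonotoneOn (fun t => h t + φ t) (Icc 0 d) := by
    refine monotoneOn_of_deriv_nonneg (convex_Icc 0 d) (by fun_prop) ?_ ?_
    · rw [interior_Icc]
      exact fun t ht => ((hh t ht).add (hφ t)).differentiableAt.differentiableWithinAt
    · rw [interior_Icc]
      intro t ht
      have := ((hh t ht).add (hφ t)).deriv
      change 0 ≤ deriv (h + φ) t
      rw [this]
      linarith [neg_abs_le (φ' t), hle t ht]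
  have m2 : MonotoneOn (fun t => h t - φ t) (Icc 0 d) := by
    refine monotoneOn_of_deriv_nonneg (convex_Icc 0 d) (by fun_prop) ?_ ?_
    · rw [interior_Icc]
      exact fun t ht => ((hh t ht).sub (hφ t)).differentiableAt.differentiableWithinAt
    · rw [interior_Icc]
      intro t ht
      have := ((hh t ht).sub (hφ t)).deriv
      change 0 ≤ deriv (h - φ) t
      rw [this]
      linarith [le_abs_self (φ' t), hle t ht]
  have a1 := m1 h0 h1 hd
  have a2 := m2 h0 h1 hd
  simp only at a1 a2
  rw [abs_le]; constructor <;> linarith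

lemma exists_theta {φ φ' : ℝ → ℝ} {d l δ : ℝ} (hd : 0 < d) (hl : 0 < l) (hδ : 0 < δ)
    (hφ : ∀ t, HasDerivAt φ (φ' t) t) (h0 : φ 0 = 0) (h1 : l * d ≤ |φ d|) :
    ∃ θ ∈ Ioo 0 d, l / 2 * δ * (θ / d) ^ (δ - 1) ≤ |φ' θ| := by
  by_contra! hcon
  have := mv_aux (h := fun t => l / 2 * d * (t / d) ^ δ)
    (h' := fun t => l / 2 * δ * (t / d) ^ (δ - 1)) hd.le hφ ?_ ?_ fun t ht => (hcon t ht).le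
  · simp only [h0, sub_zero, div_self hd.ne', Real.one_rpow, zero_div, Real.zero_rpow hδ.ne'] at this
    have : 0 < l * d := by positivity
    linarith
  · exact continuous_const.mul ((continuous_id.div_const d).rpow_const fun _ => Or.inr hδ.le)
  · intro t ht
    have hne : t / d ≠ 0 := (div_pos ht.1 hd).ne'
    have := (((hasDerivAt_id t).div_const d).rpow_const (p := δ) (Or.inl hne)).const_mul (l / 2 * d)
    refine this.congr_deriv ?_
    simp only [id]
    field_simp

lemma content_core (hn : 1 ≤ n) {q q' δ c d μ : ℝ} (hq1 : q < 1) (hq' : 0 < q')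
    (hδ : (δ - 1) * q' = -q) (hc : 0 < c) (hd : 0 < d) (hμ : 0 < μ) {A : Set E} {x : E}
    (hA : A ⊆ ball x (2 * d))
    (hcont : ENNReal.ofReal (c * d ^ ((n : ℝ) - q)) ≤ hContent n ((n : ℝ) - q) A)
    {T : E → ℝ≥0∞}
    (hT : ∀ z ∈ A, ∃ θ ∈ Ioo 0 d, ∀ y ∈ ball z θ, ENNReal.ofReal (μ * (θ / d) ^ (δ - 1)) ≤ T y) :
    ENNReal.ofReal (μ ^ q') ≤ ENNReal.ofReal (4 ^ ((n : ℝ) - q) * 3 ^ n / c)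
      * HLmax (fun y => T y ^ q') x := by
  have hs : 0 < (n : ℝ) - q := by
    have : (1:ℝ) ≤ n := by exact_mod_cast hn
    linarith
  choose! θ hθ hθT using hT
  have hintg : ∀ z ∈ A, ENNReal.ofReal (μ ^ q' * d ^ q * θ z ^ ((n : ℝ) - q)) * volume (ball (0:E) 1)
      ≤ ∫⁻ y in ball z (θ z), T y ^ q' := by
    intro z hz
    have hθ0 := (hθ z hz).1
    have h1 : ∫⁻ _ in ball z (θ z), ENNReal.ofReal (μ * (θ z / d) ^ (δ - 1)) ^ q' ≤
        ∫⁻ y in ball z (θ z), T y ^ q' := by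
      refine setLIntegral_mono' measurableSet_ball fun y hy => ?_
      exact ENNReal.rpow_le_rpow (hθT z hz y hy) hq'.le
    refine le_trans (le_of_eq ?_) h1
    rw [setLIntegral_const, vol_ball z hθ0, ← mul_assoc,
      ENNReal.ofReal_rpow_of_pos (by positivity), ← ENNReal.ofReal_mul (by positivity)]
    congr 2
    rw [Real.mul_rpow hμ.le (by positivity), ← Real.rpow_mul (by positivity), hδ,
      Real.rpow_neg (by positivity), Real.div_rpow hθ0.le hd.le, Real.rpow_sub hθ0,
      Real.rpow_natCast]
    field_simp
  obtain ⟨t, htA, htd, htc⟩ := Vitali.exists_disjoint_subfamily_covering_enlargement_ball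
    A (fun z => z) θ d (fun z hz => (hθ z hz).2.le) 4 (by norm_num)
  have htcount : t.Countable := htd.countable_of_isOpen (fun _ _ => isOpen_ball)
    fun z hz => ⟨z, mem_ball_self (hθ z (htA hz)).1⟩
  have hle := hcont.trans (hContent_le hs htcount (fun z => 4 * θ z)
    (fun z hz => mul_pos (by norm_num) (hθ z (htA hz)).1) (by
      intro a ha
      obtain ⟨b, hb, hab⟩ := htc a ha
      exact mem_iUnion₂.2 ⟨b, hb, hab (mem_ball_self (hθ a ha).1)⟩))
  set v := volume (ball (0:E) 1)
  set a : ℝ := μ ^ q' * d ^ q / 4 ^ ((n : ℝ) - q) with ha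
  have ha0 : 0 < a := by positivity
  have hsum : ENNReal.ofReal (a * (c * d ^ ((n : ℝ) - q))) * v ≤
      ENNReal.ofReal ((3 * d) ^ n) * v * HLmax (fun y => T y ^ q') x := by
    calc ENNReal.ofReal (a * (c * d ^ ((n : ℝ) - q))) * v
        = ENNReal.ofReal a * v * ENNReal.ofReal (c * d ^ ((n : ℝ) - q)) := by
          rw [ENNReal.ofReal_mul ha0.le]; ring
      _ ≤ ENNReal.ofReal a * v * ∑' z : t, ENNReal.ofReal ((4 * θ z) ^ ((n : ℝ) - q)) := by
          gcongr
      _ = ∑' z : t, ENNReal.ofReal a * v * ENNReal.ofReal ((4 * θ z) ^ ((n : ℝ) - q)) := by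
          rw [ENNReal.tsum_mul_left]
      _ ≤ ∑' z : t, ∫⁻ y in ball (z : E) (θ z), T y ^ q' := by
          refine ENNReal.tsum_le_tsum fun z => le_trans (le_of_eq ?_) (hintg z (htA z.2))
          have hθ0 := (hθ z (htA z.2)).1
          rw [mul_right_comm, ← ENNReal.ofReal_mul ha0.le]
          congr 2
          rw [Real.mul_rpow (by norm_num) hθ0.le, ha]
          field_simp
      _ = ∫⁻ y in ⋃ z ∈ t, ball z (θ z), T y ^ q' :=
          (lintegral_biUnion htcount (fun _ _ => measurableSet_ball) htd _).symm
      _ ≤ ∫⁻ y in ball x (3 * d), T y ^ q' := by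
          refine lintegral_mono_set (iUnion₂_subset fun z hz => ball_subset_ball' ?_)
          have h1 := (hθ z (htA hz)).2
          have h2 := mem_ball.1 (hA (htA hz))
          linarith
      _ ≤ volume (ball x (3 * d)) * HLmax (fun y => T y ^ q') x := by
          have := le_HLmax (fun y => T y ^ q') (x := x) (z := x) (r := 3 * d) (by positivity)
            (mem_ball_self (by positivity))
          rw [← ENNReal.inv_mul_le_iff]
          · exact this
          · exact (measure_ball_pos _ _ (by positivity)).ne'
          · exact measure_ball_lt_top.ne
      _ = _ := by rw [vol_ball x (by positivity : 0 < 3 * d)]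
  have hv0 : v ≠ 0 := v_pos
  have hvt : v ≠ ⊤ := v_fin
  have hsum2 : ENNReal.ofReal (a * (c * d ^ ((n : ℝ) - q))) ≤
      ENNReal.ofReal ((3 * d) ^ n) * HLmax (fun y => T y ^ q') x := by
    rw [mul_right_comm] at hsum
    exact (ENNReal.mul_le_mul_iff_left hv0 hvt).1 hsum
  have := mul_le_mul_right hsum2 (ENNReal.ofReal (4 ^ ((n : ℝ) - q) / (c * d ^ n)))
  rw [← ENNReal.ofReal_mul (by positivity), ← mul_assoc (ENNReal.ofReal _),
    ← ENNReal.ofReal_mul (by positivity)] at this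
  convert this using 2
  · rw [ha, Real.rpow_sub hd, Real.rpow_natCast]
    field_simp
  · congr 1
    rw [mul_pow]
    field_simp
end

section
variable {n : ℕ}
local notation "E" => EuclideanSpace ℝ (Fin n)

/-- sum of the tangential maximal functions of the partial derivatives -/
def Tsum (N : ℕ) (ψ u : E → ℝ) (x : E) : ℝ≥0∞ :=
  ∑ j : Fin n, Tmax N ψ (pd (EuclideanSpace.single j 1) u) x

lemma pd_bdd {u : E → ℝ} (hu : ContDiff ℝ (⊤ : ℕ∞) u) (hu' : HasCompactSupport u) (v : E) :
    ∃ B : ℝ, ∀ z, |pd v u z| ≤ B := by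
  obtain ⟨B, hB⟩ := (pd_hcs v hu').exists_bound_of_continuous (pd_contDiff v hu).continuous
  exact ⟨B, hB⟩

lemma Tsum_bdd {ψ u : E → ℝ} (hψ : Continuous ψ) (hψ' : HasCompactSupport ψ)
    (hu : ContDiff ℝ (⊤ : ℕ∞) u) (hu' : HasCompactSupport u) (N : ℕ) :
    ∃ B : ℝ≥0∞, B ≠ ⊤ ∧ ∀ x, Tsum N ψ u x ≤ B := by
  choose B hB using fun j : Fin n => pd_bdd hu hu' (EuclideanSpace.single j 1)
  refine ⟨∑ j, ENNReal.ofReal ((∫ w, |ψ w|) * B j), ?_, fun x => ?_⟩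
  · exact ENNReal.sum_ne_top.2 fun j _ => ENNReal.ofReal_ne_top
  · exact Finset.sum_le_sum fun j _ => Tmax_le hψ hψ' (hB j) N x

lemma local_aux {ψ : E → ℝ} (hψ : ContDiff ℝ (⊤ : ℕ∞) ψ)
    (hψ1 : ∀ z, 1 ≤ ‖z‖ → ψ z = 0) (hψint : ∫ x, ψ x = 1) (N : ℕ) {δ : ℝ} (hδ : 0 < δ) :
    ∃ K0 κ : ℝ, 0 ≤ K0 ∧ 0 < κ ∧ ∀ (u : E → ℝ), ContDiff ℝ (⊤ : ℕ∞) u → HasCompactSupport u →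
      ∀ (x z : E) (d : ℝ), 0 < d → z ∈ ball x (2 * d) → u z = 0 →
      0 < |u x| / d - K0 * (Tsum N ψ u x).toReal →
      ∃ θ ∈ Ioo 0 d, ∀ y ∈ ball z θ,
        κ * (|u x| / d - K0 * (Tsum N ψ u x).toReal) * (θ / d) ^ (δ - 1) ≤
          (Tsum N ψ u y).toReal := by
  have hψcs : HasCompactSupport ψ := tsupport_subset_closedBall (R := 1) fun z hz => hψ1 z hz.le
  have hη : ∀ j : Fin n, ContDiff ℝ (⊤ : ℕ∞) (fun w : E => w j * ψ w) := fun j => by fun_prop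
  have hηc : ∀ j : Fin n, HasCompactSupport (fun w : E => w j * ψ w) := fun j => hψcs.mul_left
  choose C hC0 hC using fun j : Fin n => repro hψ hψ1 hψint N (hη j) (hηc j)
  set K := ∑ j, C j with hK
  have hK0 : 0 ≤ K := Finset.sum_nonneg fun j _ => hC0 j
  refine ⟨K * 2 ^ N + 2 * 3 ^ N, δ / (2 * (K * 2 ^ N + 1)), by positivity, by positivity, ?_⟩
  intro u hu hu' x z d hd hz huz hl
  set τ : E → ℝ := fun y => (Tsum N ψ u y).toReal with hτ
  have hτ0 : ∀ y, 0 ≤ τ y := fun y => ENNReal.toReal_nonneg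
  have hfinj : ∀ (j : Fin n) y, Tmax N ψ (pd (EuclideanSpace.single j 1) u) y ≠ ⊤ := by
    intro j y
    obtain ⟨B, hB⟩ := pd_bdd hu hu' (EuclideanSpace.single j 1)
    exact ne_top_of_le_ne_top ENNReal.ofReal_ne_top (Tmax_le hψ.continuous hψcs hB N y)
  have hτsum : ∀ y, τ y = ∑ j, (Tmax N ψ (pd (EuclideanSpace.single j 1) u) y).toReal := fun y => by
    rw [hτ]; simp only [Tsum]; rw [ENNReal.toReal_sum fun j _ => hfinj j y]
  have hτj : ∀ (j : Fin n) y, (Tmax N ψ (pd (EuclideanSpace.single j 1) u) y).toReal ≤ τ y := by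
    intro j y
    rw [hτsum]
    exact Finset.single_le_sum
      (f := fun j : Fin n => (Tmax N ψ (pd (EuclideanSpace.single j 1) u) y).toReal)
      (fun i _ => ENNReal.toReal_nonneg) (Finset.mem_univ j)
  have hadm : ∀ (j : Fin n) (y w : E) (t : ℝ), 0 < t →
      |cv (fun w => w j * ψ w) (pd (EuclideanSpace.single j 1) u) t w| ≤
        C j * τ y * (1 + ‖y - w‖ / t) ^ N := by
    intro j y w t ht
    obtain ⟨B, hB⟩ := pd_bdd hu hu' (EuclideanSpace.single j 1)
    refine hC j _ (pd_contDiff _ hu).continuous B hB y (τ y) (hτ0 y) (fun w t ht => ?_) w t ht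
    exact (Tmax_adm N (hfinj j y) w t ht).trans (by gcongr; exact hτj j y)
  let φ' : E → ℝ → ℝ := fun w t =>
    -∑ j, cv (fun w => w j * ψ w) (pd (EuclideanSpace.single j 1) u) t w
  have hφ : ∀ w t, HasDerivAt (fun s => cv ψ u s w) (φ' w t) t := fun w t =>
    cv_hasDerivAt_scale hψ.continuous hψcs hu hu' t w
  have hD : ∀ y w t, 0 < t → ‖y - w‖ ≤ t → |φ' w t| ≤ K * 2 ^ N * τ y := by
    intro y w t ht hyw
    have h2 : (1 + ‖y - w‖ / t) ≤ 2 := by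
      have := (div_le_one ht).2 hyw
      linarith
    simp only [φ', abs_neg]
    refine (Finset.abs_sum_le_sum_abs _ _).trans ?_
    rw [hK, Finset.sum_mul, Finset.sum_mul]
    refine Finset.sum_le_sum fun j _ => (hadm j y w t ht).trans ?_
    have := hC0 j
    have := hτ0 y
    calc C j * τ y * (1 + ‖y - w‖ / t) ^ N ≤ C j * τ y * 2 ^ N := by gcongr
      _ = _ := by ring
  have hi : |cv ψ u d x - u x| ≤ K * 2 ^ N * τ x * d := by
    have := mv_aux (h := fun t => K * 2 ^ N * τ x * t) (h' := fun _ => K * 2 ^ N * τ x) hd.le (hφ x)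
      (by fun_prop) (fun t _ => by simpa using (hasDerivAt_id t).const_mul (K * 2 ^ N * τ x))
      (fun t ht => hD x x t ht.1 (by simpa using ht.1.le))
    simpa [cv_zero hψint] using this
  have hii : |cv ψ u d z - cv ψ u d x| ≤ 3 ^ N * τ x * (2 * d) := by
    have hcd := cv_contDiff hψ.continuous hu hu' hd
    have := (convex_closedBall x (2 * d)).norm_image_sub_le_of_norm_fderiv_le (𝕜 := ℝ)
      (f := cv ψ u d) (C := 3 ^ N * τ x) (x := x) (y := z)
      (fun w _ => (hcd.differentiable (by simp)).differentiableAt) (fun w hw => ?_)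
      (mem_closedBall_self (by positivity)) (ball_subset_closedBall hz)
    · rw [Real.norm_eq_abs] at this
      refine this.trans ?_
      have hzx : ‖z - x‖ ≤ 2 * d := by rw [← dist_eq_norm]; exact (mem_ball.1 hz).le
      have := hτ0 x
      gcongr
    · refine (norm_fderiv_le_sum _ w).trans ?_
      rw [hτsum, Finset.mul_sum]
      refine Finset.sum_le_sum fun j _ => ?_
      rw [cv_pd hψ.continuous hu hu' hd]
      refine (Tmax_adm N (hfinj j x) w d hd).trans ?_
      rw [mul_comm]
      have h3 : 1 + ‖x - w‖ / d ≤ 3 := by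
        have h : ‖x - w‖ ≤ 2 * d := by rw [← dist_eq_norm, dist_comm]; exact mem_closedBall.1 hw
        have := (div_le_iff₀ hd).2 h
        linarith
      gcongr
  set l := |u x| / d - (K * 2 ^ N + 2 * 3 ^ N) * τ x with hldef
  have hlow : l * d ≤ |cv ψ u d z| := by
    have e : l * d = |u x| - (K * 2 ^ N + 2 * 3 ^ N) * τ x * d := by
      rw [hldef]; field_simp
    have t1 : |u x| ≤ |cv ψ u d x - u x| + |cv ψ u d z - cv ψ u d x| + |cv ψ u d z| := by
      have a1 := abs_sub_abs_le_abs_sub (u x) (cv ψ u d x)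
      have a2 := abs_sub_abs_le_abs_sub (cv ψ u d x) (cv ψ u d z)
      rw [abs_sub_comm] at a1 a2
      linarith
    rw [e]
    linarith
  obtain ⟨θ, hθ, hθ'⟩ := exists_theta hd hl hδ (hφ z) (by rw [cv_zero hψint, huz]) hlow
  refine ⟨θ, hθ, fun y hy => ?_⟩
  have h1 := hD y z θ hθ.1 (by rw [← dist_eq_norm]; exact (mem_ball.1 hy).le)
  have h2 : l / 2 * δ * (θ / d) ^ (δ - 1) ≤ (K * 2 ^ N + 1) * τ y := by
    have := hτ0 y
    linarith
  have : δ / (2 * (K * 2 ^ N + 1)) * l * (θ / d) ^ (δ - 1) =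
      (l / 2 * δ * (θ / d) ^ (δ - 1)) / (K * 2 ^ N + 1) := by
    field_simp
  rw [this, div_le_iff₀ (by positivity), mul_comm (τ y)]
  exact h2
end

section
variable {n : ℕ}
local notation "E" => EuclideanSpace ℝ (Fin n)

lemma sum_rpow_le {ι : Type*} (s : Finset ι) (f : ι → ℝ≥0∞) {p : ℝ} (hp : 0 < p) (hp1 : p ≤ 1) :
    (∑ i ∈ s, f i) ^ p ≤ ∑ i ∈ s, f i ^ p := by
  classical
  induction s using Finset.induction_on with
  | empty => simp [hp]
  | insert a s ha ih =>
    rw [Finset.sum_insert ha, Finset.sum_insert ha]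
    exact (ENNReal.rpow_add_le_add_rpow _ _ hp.le hp1).trans (by gcongr)

lemma measurable_Tsum (N : ℕ) (ψ u : E → ℝ) : Measurable (Tsum N ψ u) := by
  unfold Tsum
  exact Finset.measurable_sum _ fun j _ => measurable_Tmax N ψ _

lemma pointwise_aux (hn : 1 ≤ n) {q q' : ℝ} (hq : 0 < q) (hqq : q < q') (hq1 : q < 1)
    {ψ : E → ℝ} (hψ : ContDiff ℝ (⊤ : ℕ∞) ψ)
    (hψ1 : ∀ z, 1 ≤ ‖z‖ → ψ z = 0) (hψint : ∫ x, ψ x = 1) (N : ℕ)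
    {Ω : Set E} (hΩo : IsOpen Ω) (hΩb : Bornology.IsBounded Ω) {c : ℝ} (hc : 0 < c)
    (hthick : ∀ x ∉ Ω, ∀ r : ℝ, 0 < r →
      ENNReal.ofReal (c * r ^ ((n : ℝ) - q)) ≤ hContent n ((n : ℝ) - q) (Ωᶜ ∩ ball x r)) :
    ∃ K0 C' : ℝ≥0∞, K0 ≠ ⊤ ∧ C' ≠ ⊤ ∧ ∀ (u : E → ℝ), ContDiff ℝ (⊤ : ℕ∞) u →
      HasCompactSupport u → tsupport u ⊆ Ω → ∀ x ∈ Ω,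
      ENNReal.ofReal (|u x| / infDist x (frontier Ω)) ≤
        K0 * Tsum N ψ u x + (C' * HLmax (fun y => Tsum N ψ u y ^ q') x) ^ (1 / q') := by
  have hq'0 : 0 < q' := hq.trans hqq
  have hψcs : HasCompactSupport ψ := tsupport_subset_closedBall (R := 1) fun z hz => hψ1 z hz.le
  set δ := 1 - q / q' with hδdef
  have hδ : 0 < δ := by
    have := (div_lt_one hq'0).2 hqq
    linarith
  have hδ' : (δ - 1) * q' = -q := by rw [hδdef]; field_simp; ring
  obtain ⟨K0, κ, hK0, hκ, hloc⟩ := local_aux hψ hψ1 hψint N hδ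
  refine ⟨ENNReal.ofReal K0, ENNReal.ofReal ((κ ^ q')⁻¹) *
    ENNReal.ofReal (4 ^ ((n : ℝ) - q) * 3 ^ n / c), ENNReal.ofReal_ne_top,
    ENNReal.mul_ne_top ENNReal.ofReal_ne_top ENNReal.ofReal_ne_top, ?_⟩
  intro u hu hu' hus x hx
  obtain ⟨B, hBt, hB⟩ := Tsum_bdd hψ.continuous hψcs hu hu' N
  have hfin : ∀ y, Tsum N ψ u y ≠ ⊤ := fun y => ne_top_of_le_ne_top hBt (hB y)
  have : Nonempty (Fin n) := ⟨⟨0, hn⟩⟩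
  have : Nontrivial E := inferInstance
  have hΩu : Ω ≠ univ := by
    rintro rfl
    exact NormedSpace.unbounded_univ ℝ E hΩb
  have hfr : (frontier Ω).Nonempty := nonempty_frontier_iff.2 ⟨⟨x, hx⟩, hΩu⟩
  obtain ⟨x₀, hx₀, hdist⟩ := isClosed_frontier.exists_infDist_eq_dist hfr x
  have hx₀Ω : x₀ ∉ Ω := by
    intro h
    rw [hΩo.frontier_eq] at hx₀
    exact hx₀.2 h
  set d := infDist x (frontier Ω) with hd
  have hd0 : 0 < d := by
    rw [hdist]
    exact dist_pos.2 fun h => hx₀Ω (h ▸ hx)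
  set τ := (Tsum N ψ u x).toReal with hτ
  set l := |u x| / d - K0 * τ with hl
  have hsplit : ENNReal.ofReal (|u x| / d) ≤ ENNReal.ofReal K0 * Tsum N ψ u x + ENNReal.ofReal l := by
    have : |u x| / d = K0 * τ + l := by rw [hl]; ring
    rw [this]
    refine ENNReal.ofReal_add_le.trans ?_
    rw [ENNReal.ofReal_mul hK0, hτ, ENNReal.ofReal_toReal (hfin x)]
  refine hsplit.trans (add_le_add le_rfl ?_)
  rcases le_or_gt l 0 with hl0 | hl0
  · rw [ENNReal.ofReal_of_nonpos hl0]; exact zero_le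
  have hA : Ωᶜ ∩ ball x₀ d ⊆ ball x (2 * d) := by
    intro z hz
    have h1 := mem_ball.1 hz.2
    have := dist_triangle z x₀ x
    rw [dist_comm x₀ x, ← hdist] at this
    rw [mem_ball]
    linarith
  have hcore := content_core hn (q := q) (q' := q') (δ := δ) (c := c) (d := d) (μ := κ * l) hq1 hq'0
    hδ' hc hd0 (by positivity) hA (hthick x₀ hx₀Ω d hd0) (T := Tsum N ψ u) (by
      intro z hz
      have huz : u z = 0 := image_eq_zero_of_notMem_tsupport fun h => hz.1 (hus h)
      obtain ⟨θ, hθ, h⟩ := hloc u hu hu' x z d hd0 (hA hz) huz hl0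
      exact ⟨θ, hθ, fun y hy => ENNReal.ofReal_le_of_le_toReal (h y hy)⟩)
  rw [one_div, ENNReal.le_rpow_inv_iff hq'0, ENNReal.ofReal_rpow_of_pos hl0, mul_assoc]
  refine le_trans (le_of_eq ?_) (mul_le_mul_right hcore _)
  rw [← ENNReal.ofReal_mul (by positivity), Real.mul_rpow hκ.le hl0.le]
  congr 1
  field_simp

lemma Tmax_Lp (hn : 1 ≤ n) {q p : ℝ} (hq : 0 < q) (hqp : q < p) {ψ : E → ℝ}
    (hψ : ContDiff ℝ (⊤ : ℕ∞) ψ)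
    (hψ1 : ∀ z, 1 ≤ ‖z‖ → ψ z = 0) (hψint : ∫ x, ψ x = 1) (N : ℕ) (hN : (n : ℝ) ≤ N * q) :
    ∃ C : ℝ≥0∞, C ≠ ⊤ ∧ ∀ (f : E → ℝ) (_ : Continuous f) (B : ℝ) (_ : ∀ z, |f z| ≤ B),
      ∫⁻ x, Tmax N ψ f x ^ p ≤ C * ∫⁻ x, Gmax ψ f x ^ p := by
  have hψcs : HasCompactSupport ψ := tsupport_subset_closedBall (R := 1) fun z hz => hψ1 z hz.le
  obtain ⟨C1, hC1, h1⟩ := Tmax_self_improve hψ hψ1 hψint N hq hN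
  have hs : 1 < p / q := (one_lt_div hq).2 hqp
  have hs0 : 0 ≤ p / q := by linarith
  obtain ⟨C2, hC2, h2⟩ := HL_strong hn hs
  have hcan : ∀ a : ℝ≥0∞, (a ^ q) ^ (p / q) = a ^ p := fun a => by
    rw [← ENNReal.rpow_mul, mul_div_cancel₀ _ hq.ne']
  refine ⟨C1 ^ (p / q) * C2, ENNReal.mul_ne_top (ENNReal.rpow_ne_top_of_nonneg hs0 hC1) hC2, ?_⟩
  intro f hf B hB
  have hGm := measurable_Gmax hψ.continuous hψcs hf
  calc ∫⁻ x, Tmax N ψ f x ^ p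
      ≤ ∫⁻ x, C1 ^ (p / q) * HLmax (fun y => Gmax ψ f y ^ q) x ^ (p / q) := by
        refine lintegral_mono fun x => ?_
        rw [← hcan, ← ENNReal.mul_rpow_of_nonneg _ _ hs0]
        exact ENNReal.rpow_le_rpow (h1 f hf B hB x) hs0
    _ = C1 ^ (p / q) * ∫⁻ x, HLmax (fun y => Gmax ψ f y ^ q) x ^ (p / q) :=
        lintegral_const_mul _ ((measurable_HLmax _).pow_const _)
    _ ≤ C1 ^ (p / q) * (C2 * ∫⁻ x, (Gmax ψ f x ^ q) ^ (p / q)) := by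
        refine mul_le_mul_right (h2 _ (hGm.pow_const _)
          (ENNReal.ofReal ((∫ w, |ψ w|) * B) ^ q)
          (ENNReal.rpow_ne_top_of_nonneg hq.le ENNReal.ofReal_ne_top) fun x => ?_) _
        exact ENNReal.rpow_le_rpow (Gmax_le hψ.continuous hψcs hB x) hq.le
    _ = _ := by simp only [hcan, mul_assoc]

lemma convMax_eq (ψ u : E → ℝ) (j : Fin n) (x : E) :
    convMax n ψ u j x = Gmax ψ (pd (EuclideanSpace.single j 1) u) x := by
  unfold convMax Gmax
  refine iSup_congr fun t => ?_
  rw [cv_eq_def _ _ t.2]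
  rfl

end
/-- **Theorem 4.4 (ii).** A bounded domain `Ω ⊆ ℝⁿ` whose complement is thick in the
sense of `(n-q)`-Hausdorff content for some `q < p` carries the `p`-Hardy inequality
for Hardy–Sobolev functions, `n/(n+1) < q < p ≤ 1`. -/
theorem hardy_inequality_of_thick_complement
    (n : ℕ) (hn : 1 ≤ n) (q p : ℝ) (hq : (n : ℝ) / (n + 1) < q) (hqp : q < p)
    (hp : p ≤ 1)
    (ψ : EuclideanSpace ℝ (Fin n) → ℝ) (hψ : ContDiff ℝ (⊤ : ℕ∞) ψ)
    (hψsupp : tsupport ψ ⊆ ball 0 1) (hψint : ∫ x, ψ x = 1)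
    (Ω : Set (EuclideanSpace ℝ (Fin n))) (hΩo : IsOpen Ω) (hΩc : IsConnected Ω)
    (hΩb : Bornology.IsBounded Ω) (c : ℝ) (hc : 0 < c)
    (hthick : ∀ x ∉ Ω, ∀ r : ℝ, 0 < r →
      ENNReal.ofReal (c * r ^ ((n : ℝ) - q)) ≤ hContent n ((n : ℝ) - q) (Ωᶜ ∩ ball x r)) :
    ∃ C : ℝ≥0∞, C ≠ ⊤ ∧
      ∀ u : EuclideanSpace ℝ (Fin n) → ℝ,
        ContDiff ℝ (⊤ : ℕ∞) u → HasCompactSupport u → tsupport u ⊆ Ω →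
        ∫⁻ x in Ω, ENNReal.ofReal (|u x| / infDist x (frontier Ω)) ^ p ≤
          C * ∑ j : Fin n, ∫⁻ x, convMax n ψ u j x ^ p := by
  have hn' : (1:ℝ) ≤ n := by exact_mod_cast hn
  have hq0 : 0 < q := lt_of_le_of_lt (by positivity) hq
  have hp0 : 0 < p := hq0.trans hqp
  have hN : (n : ℝ) ≤ ((n + 1 : ℕ) : ℝ) * q := by
    rw [div_lt_iff₀ (by positivity)] at hq
    push_cast
    linarith
  have hψ1 : ∀ z, 1 ≤ ‖z‖ → ψ z = 0 := by
    intro z hz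
    refine image_eq_zero_of_notMem_tsupport fun h => ?_
    have := hψsupp h
    rw [mem_ball_zero_iff] at this
    linarith
  have hψcs : HasCompactSupport ψ := tsupport_subset_closedBall (R := 1) fun z hz => hψ1 z hz.le
  obtain ⟨q', hqq, hqp'⟩ := exists_between hqp
  have hq'0 : 0 < q' := hq0.trans hqq
  obtain ⟨K0, C', hK0, hC', hpt⟩ := pointwise_aux hn hq0 hqq (by linarith) hψ hψ1 hψint (n + 1)
    hΩo hΩb hc hthick
  have hs : 1 < p / q' := (one_lt_div hq'0).2 hqp'
  have hs0 : 0 ≤ p / q' := by linarith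
  obtain ⟨C2, hC2, h2⟩ := HL_strong hn hs
  obtain ⟨C3, hC3, h3⟩ := Tmax_Lp hn hq0 hqp hψ hψ1 hψint (n + 1) hN
  have hK0p : K0 ^ p ≠ ⊤ := ENNReal.rpow_ne_top_of_nonneg hp0.le hK0
  have hCp : C' ^ (p / q') ≠ ⊤ := ENNReal.rpow_ne_top_of_nonneg hs0 hC'
  refine ⟨(K0 ^ p + C' ^ (p / q') * C2) * C3,
    ENNReal.mul_ne_top (ENNReal.add_ne_top.2 ⟨hK0p, ENNReal.mul_ne_top hCp hC2⟩) hC3, ?_⟩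
  intro u hu hu' hus
  obtain ⟨B, hBt, hB⟩ := Tsum_bdd hψ.continuous hψcs hu hu' (n + 1)
  have hTm := measurable_Tsum (n + 1) ψ u
  set F := Tsum (n + 1) ψ u with hF
  have hF1 : ∫⁻ x, F x ^ p ≤ C3 * ∑ j : Fin n, ∫⁻ x, convMax n ψ u j x ^ p := by
    calc ∫⁻ x, F x ^ p
        ≤ ∫⁻ x, ∑ j : Fin n, Tmax (n + 1) ψ (pd (EuclideanSpace.single j 1) u) x ^ p :=
          lintegral_mono fun x => sum_rpow_le _ _ hp0 hp
      _ = ∑ j : Fin n, ∫⁻ x, Tmax (n + 1) ψ (pd (EuclideanSpace.single j 1) u) x ^ p :=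
          lintegral_finsetSum _ fun j _ => (measurable_Tmax _ _ _).pow_const _
      _ ≤ ∑ j : Fin n, C3 * ∫⁻ x, convMax n ψ u j x ^ p := by
          refine Finset.sum_le_sum fun j _ => ?_
          obtain ⟨B, hB⟩ := pd_bdd hu hu' (EuclideanSpace.single j 1)
          simp only [convMax_eq]
          exact h3 _ (pd_contDiff _ hu).continuous B hB
      _ = _ := by rw [Finset.mul_sum]
  have hF2 : ∫⁻ x, HLmax (fun y => F y ^ q') x ^ (p / q') ≤ C2 * ∫⁻ x, F x ^ p := by
    refine (h2 (fun y => F y ^ q') (hTm.pow_const _) (B ^ q')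
      (ENNReal.rpow_ne_top_of_nonneg hq'0.le hBt)
      fun x => ENNReal.rpow_le_rpow (hB x) hq'0.le).trans (le_of_eq ?_)
    simp only [← ENNReal.rpow_mul, mul_div_cancel₀ _ hq'0.ne']
  calc ∫⁻ x in Ω, ENNReal.ofReal (|u x| / infDist x (frontier Ω)) ^ p
      ≤ ∫⁻ x in Ω, (K0 ^ p * F x ^ p +
          C' ^ (p / q') * HLmax (fun y => F y ^ q') x ^ (p / q')) := by
        refine setLIntegral_mono' hΩo.measurableSet fun x hx => ?_
        refine (ENNReal.rpow_le_rpow (hpt u hu hu' hus x hx) hp0.le).trans ?_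
        refine (ENNReal.rpow_add_le_add_rpow _ _ hp0.le hp).trans (le_of_eq ?_)
        rw [ENNReal.mul_rpow_of_nonneg _ _ hp0.le, ← ENNReal.rpow_mul, one_div_mul_eq_div,
          ENNReal.mul_rpow_of_nonneg _ _ hs0]
    _ ≤ ∫⁻ x, (K0 ^ p * F x ^ p +
          C' ^ (p / q') * HLmax (fun y => F y ^ q') x ^ (p / q')) := setLIntegral_le_lintegral _ _
    _ = K0 ^ p * (∫⁻ x, F x ^ p) +
          C' ^ (p / q') * ∫⁻ x, HLmax (fun y => F y ^ q') x ^ (p / q') := by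
        rw [lintegral_add_left ((hTm.pow_const _).const_mul _),
          lintegral_const_mul _ (hTm.pow_const _),
          lintegral_const_mul _ ((measurable_HLmax _).pow_const _)]
    _ ≤ K0 ^ p * (∫⁻ x, F x ^ p) + C' ^ (p / q') * (C2 * ∫⁻ x, F x ^ p) := by gcongr
    _ = (K0 ^ p + C' ^ (p / q') * C2) * ∫⁻ x, F x ^ p := by ring
    _ ≤ (K0 ^ p + C' ^ (p / q') * C2) * (C3 * ∑ j : Fin n, ∫⁻ x, convMax n ψ u j x ^ p) := by
        gcongr
    _ = _ := by rw [mul_assoc]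
end
end

section
/- Let n ≥ 1, n/(n+1) < q < p ≤ 1, and c₀ > 0. There is a constant c = c(n,p,q,c₀) > 0 with the following property: for every ball B ⊆ ℝⁿ of radius 1, every compact set E ⊆ cl(B) with H^{n−q}_∞(E) ≥ c₀, every smooth function u : ℝⁿ → ℝ with compact support contained in 2B satisfying u ≥ 1 on E, and every Hajlasz gradient g of u on ℝⁿ, one has ∫_{ℝⁿ} g^p dm ≥ c. -/
open MeasureTheory Metric Set ENNReal NNReal

noncomputable section

/-- `g` is a Hajlasz gradient of `u` on `U ⊆ ℝⁿ`: `g` is measurable, nonnegative, and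
off a set of measure zero `|u x - u y| ≤ ‖x - y‖ (g x + g y)` for `x, y ∈ U`. -/
def IsHajlaszGradientOn (n : ℕ) (u g : EuclideanSpace ℝ (Fin n) → ℝ)
    (U : Set (EuclideanSpace ℝ (Fin n))) : Prop :=
  Measurable g ∧ (∀ x, 0 ≤ g x) ∧
    ∃ E : Set (EuclideanSpace ℝ (Fin n)), MeasureTheory.volume E = 0 ∧
      ∀ x ∈ U \ E, ∀ y ∈ U \ E, |u x - u y| ≤ ‖x - y‖ * (g x + g y)

/-- Coverings by countably many balls bound the content. -/
theorem hContent_le_tsum (n : ℕ) (s : ℝ) (hs : 0 < s) (A : Set (EuclideanSpace ℝ (Fin n)))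
    {ι : Type*} [Countable ι] (x : ι → EuclideanSpace ℝ (Fin n)) (ρ : ι → ℝ)
    (hρ : ∀ i, 0 < ρ i) (hA : A ⊆ ⋃ i, ball (x i) (ρ i)) :
    hContent n s A ≤ ∑' i, ENNReal.ofReal (ρ i ^ s) := by
  apply ENNReal.le_of_forall_pos_le_add
  intro ε hε _
  obtain ⟨e, he, hesum⟩ := ENNReal.exists_pos_sum_of_countable
    (ε := (ε : ℝ≥0∞)) (by simpa using hε.ne') ℕ
  obtain ⟨hd⟩ := nonempty_denumerable (ι ⊕ ℕ)
  let φ : ι ⊕ ℕ ≃ ℕ := Denumerable.eqv (ι ⊕ ℕ)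
  let X : ι ⊕ ℕ → EuclideanSpace ℝ (Fin n) := Sum.elim x (fun _ => 0)
  let P : ι ⊕ ℕ → ℝ := Sum.elim ρ (fun k => (e k : ℝ) ^ (1 / s))
  have hsum : ∑' k, ENNReal.ofReal (P (φ.symm k) ^ s)
      = ∑' i, ENNReal.ofReal (ρ i ^ s) + ∑' k, (e k : ℝ≥0∞) := by
    rw [φ.symm.tsum_eq (fun i => ENNReal.ofReal (P i ^ s)),
      Summable.tsum_sum ENNReal.summable ENNReal.summable]
    congr 1
    apply tsum_congr
    intro k
    simp only [P, Sum.elim_inr]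
    rw [← Real.rpow_mul (by positivity), one_div, inv_mul_cancel₀ hs.ne', Real.rpow_one]
    simp
  have hle : hContent n s A ≤ ∑' k, ENNReal.ofReal (P (φ.symm k) ^ s) := by
    refine sInf_le ⟨X ∘ φ.symm, P ∘ φ.symm, ?_, ?_, rfl⟩
    · intro k
      simp only [Function.comp]
      rcases φ.symm k with i | j
      · exact hρ i
      · exact Real.rpow_pos_of_pos (by exact_mod_cast he j) _
    · intro a ha
      obtain ⟨i, hi⟩ := mem_iUnion.1 (hA ha)
      refine mem_iUnion.2 ⟨φ (Sum.inl i), ?_⟩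
      simpa [X, P] using hi
  rw [hsum] at hle
  exact hle.trans (by gcongr)

/-- Telescoping along a chain: some scale has no good point. -/
theorem exists_bad_scale (n : ℕ) (θ : ℝ) (hθ : θ < 1) (hθ0 : 0 ≤ θ)
    (u g : EuclideanSpace ℝ (Fin n) → ℝ) (hu : Continuous u)
    (N : Set (EuclideanSpace ℝ (Fin n)))
    (hN : ∀ x ∉ N, ∀ y ∉ N, |u x - u y| ≤ ‖x - y‖ * (g x + g y))
    (x : EuclideanSpace ℝ (Fin n)) (hx : 1 ≤ u x) :
    ∃ k : ℕ, ∀ y ∈ ball x (12 / 2 ^ k), y ∉ ball x (12 / 2 ^ k / 4) → y ∉ N →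
      (1 - (2 : ℝ) ^ (θ - 1)) / 192 * ((2 : ℝ) ^ θ) ^ k < g y ∨ (k = 0 ∧ u y ≠ 0) := by
  by_contra! hcon
  choose y hy1 hy2 hyN hg h0 using hcon
  set a : ℝ := (2 : ℝ) ^ θ with ha
  have ha1 : 1 ≤ a := Real.one_le_rpow (by norm_num) hθ0
  have ha2 : a < 2 := by
    have := Real.rpow_lt_rpow_of_exponent_lt (x := 2) (by norm_num) hθ
    simpa [ha] using this
  have hsa : (2 : ℝ) ^ (θ - 1) = a / 2 := by
    rw [Real.rpow_sub (by norm_num), Real.rpow_one]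
  rw [hsa] at hg
  have hy0 : u (y 0) = 0 := by
    exact h0 0 rfl
  have hstep : ∀ k, u (y (k + 1)) - u (y k) ≤ (1 - a / 2) / 2 * (a / 2) ^ k := by
    intro k
    have h1 := hN _ (hyN (k + 1)) _ (hyN k)
    have h2 := hg k
    have h3 := hg (k + 1)
    have h4 : ‖y (k + 1) - y k‖ ≤ 24 / 2 ^ k := by
      rw [← dist_eq_norm]
      have e1 := mem_ball.1 (hy1 k)
      have e2 := mem_ball.1 (hy1 (k + 1))
      have e3 := dist_triangle_right (y (k + 1)) (y k) x
      have e4 : (12 : ℝ) / 2 ^ (k + 1) ≤ 12 / 2 ^ k := by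
        gcongr <;> norm_num
      have e5 : (24 : ℝ) / 2 ^ k = 12 / 2 ^ k + 12 / 2 ^ k := by ring
      linarith
    have hak : 0 < a ^ k := by positivity
    have h5 : g (y (k + 1)) + g (y k) ≤ 4 * ((1 - a / 2) / 192 * a ^ k) := by
      have : (1 - a / 2) / 192 * a ^ (k + 1) ≤ 2 * ((1 - a / 2) / 192 * a ^ k) := by
        have h6 : 0 ≤ (1 - a / 2) / 192 * a ^ k := by
          apply mul_nonneg _ hak.le
          linarith
        rw [pow_succ]
        nlinarith
      have h6 : 0 ≤ (1 - a / 2) / 192 * a ^ k := by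
        apply mul_nonneg _ hak.le
        linarith
      linarith
    have h6 : 0 ≤ (1 - a / 2) / 192 * a ^ k := by
      apply mul_nonneg _ hak.le
      linarith
    calc u (y (k + 1)) - u (y k) ≤ _ := (le_abs_self _).trans h1
      _ ≤ ‖y (k + 1) - y k‖ * (4 * ((1 - a / 2) / 192 * a ^ k)) := by gcongr
      _ ≤ 24 / 2 ^ k * (4 * ((1 - a / 2) / 192 * a ^ k)) := by gcongr
      _ = _ := by rw [div_pow]; ring
  have hbd : ∀ k, u (y k) ≤ (1 - (a / 2) ^ k) / 2 := by
    intro k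
    induction k with
    | zero => simp [hy0]
    | succ k ih =>
      have := hstep k
      rw [pow_succ]
      linarith
  have hlim : Filter.Tendsto y Filter.atTop (nhds x) := by
    rw [tendsto_iff_dist_tendsto_zero]
    have ht : Filter.Tendsto (fun k : ℕ => (12 : ℝ) * (1 / 2) ^ k) Filter.atTop (nhds 0) := by
      simpa using (tendsto_pow_atTop_nhds_zero_of_lt_one (r := (1 / 2 : ℝ))
        (by norm_num) (by norm_num)).const_mul 12
    refine squeeze_zero (fun _ => dist_nonneg) (fun k => ?_) ht
    have := (mem_ball.1 (hy1 k)).le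
    calc _ ≤ _ := this
      _ = _ := by rw [one_div, inv_pow]; rfl
  have hle : u x ≤ 1 / 2 := by
    refine le_of_tendsto ((hu.tendsto x).comp hlim) (Filter.Eventually.of_forall fun k => ?_)
    have := hbd k
    have : 0 ≤ (a / 2) ^ k := by positivity
    simp only [Function.comp]
    linarith
  linarith

/-- At a bad scale, the mass of `g ^ p` is large. -/
theorem exists_mass_scale (n : ℕ) (hn : 1 ≤ n) (q p : ℝ) (hq : 0 < q) (hqp : q < p)
    (u g : EuclideanSpace ℝ (Fin n) → ℝ) (hu : Continuous u) (hgm : Measurable g)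
    (N : Set (EuclideanSpace ℝ (Fin n))) (hN0 : volume N = 0)
    (hN : ∀ x ∉ N, ∀ y ∉ N, |u x - u y| ≤ ‖x - y‖ * (g x + g y))
    (x : EuclideanSpace ℝ (Fin n)) (hx : 1 ≤ u x) (hout : ∀ y, 3 ≤ dist y x → u y = 0) :
    ∃ r : ℝ, 0 < r ∧ r ≤ 12 ∧
      ENNReal.ofReal (((1 - (2 : ℝ) ^ (q / p - 1)) / 192) ^ p * r ^ ((n : ℝ) - q) * (3 / 4))
        * volume (ball (0 : EuclideanSpace ℝ (Fin n)) 1)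
        ≤ ∫⁻ y in closedBall x r, ENNReal.ofReal (g y) ^ p := by
  have hp : 0 < p := hq.trans hqp
  have hθ : q / p < 1 := (div_lt_one hp).2 hqp
  obtain ⟨k, hk⟩ := exists_bad_scale n (q / p) hθ (by positivity) u g hu N hN x hx
  set r : ℝ := 12 / 2 ^ k with hr
  have hr0 : 0 < r := by positivity
  set δ : ℝ := (1 - (2 : ℝ) ^ (q / p - 1)) / 192 with hδ
  have hδ0 : 0 < δ := by
    have : (2 : ℝ) ^ (q / p - 1) < 1 :=
      Real.rpow_lt_one_of_one_lt_of_neg (by norm_num) (by linarith)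
    rw [hδ]; linarith
  set l : ℝ := δ * ((2 : ℝ) ^ (q / p)) ^ k with hl
  have hl0 : 0 < l := by positivity
  refine ⟨r, hr0, div_le_self (by norm_num) (one_le_pow₀ (by norm_num)), ?_⟩
  set S : Set (EuclideanSpace ℝ (Fin n)) := {y | l < g y} with hS
  have hSm : MeasurableSet S := measurableSet_lt measurable_const hgm
  have hcov : ball x r ⊆ (S ∩ ball x r) ∪ ball x (r / 4) ∪ N := by
    intro y hy
    by_cases h1 : y ∈ ball x (r / 4)
    · exact Or.inl (Or.inr h1)
    by_cases h2 : y ∈ N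
    · exact Or.inr h2
    rcases hk y hy h1 h2 with h | ⟨h, h'⟩
    · exact Or.inl (Or.inl ⟨h, hy⟩)
    · exfalso
      apply h'
      apply hout
      rw [mem_ball, not_lt, hr, h] at h1
      norm_num at h1
      exact h1
  set ω := volume (ball (0 : EuclideanSpace ℝ (Fin n)) 1) with hω
  have hωt : ω ≠ ⊤ := measure_ball_lt_top.ne
  have hv : ∀ t : ℝ, 0 < t → volume (ball x t) = ENNReal.ofReal (t ^ n) * ω := by
    intro t ht
    have : Nonempty (Fin n) := ⟨⟨0, hn⟩⟩
    have := Measure.addHaar_ball (μ := (volume : Measure (EuclideanSpace ℝ (Fin n)))) x ht.le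
    simpa using this
  have hm1 : volume (ball x r) ≤ volume (S ∩ ball x r) + volume (ball x (r / 4)) := by
    calc _ ≤ _ := measure_mono hcov
      _ ≤ _ := measure_union_le _ _
      _ ≤ _ := by rw [hN0, add_zero]; exact measure_union_le _ _
  have hm2 : ENNReal.ofReal (r ^ n * (3 / 4)) * ω ≤ volume (S ∩ ball x r) := by
    rw [hv r hr0, hv (r / 4) (by positivity)] at hm1
    have h4 : (r / 4) ^ n ≤ r ^ n * (1 / 4) := by
      rw [div_pow, div_eq_mul_inv]
      have : (4 : ℝ) ≤ 4 ^ n := le_self_pow₀ (by norm_num) (by omega)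
      have : ((4 : ℝ) ^ n)⁻¹ ≤ 1 / 4 := by
        rw [one_div]; exact inv_anti₀ (by norm_num) this
      gcongr
    have h5 : ENNReal.ofReal (r ^ n * (3 / 4)) * ω + ENNReal.ofReal (r ^ n * (1 / 4)) * ω
        ≤ volume (S ∩ ball x r) + ENNReal.ofReal (r ^ n * (1 / 4)) * ω := by
      rw [← add_mul, ← ENNReal.ofReal_add (by positivity) (by positivity)]
      calc _ = ENNReal.ofReal (r ^ n) * ω := by congr 2; ring
        _ ≤ _ := hm1
        _ ≤ _ := by gcongr
    exact (ENNReal.add_le_add_iff_right (ENNReal.mul_ne_top ENNReal.ofReal_ne_top hωt)).1 h5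
  have hlp : δ ^ p * r ^ (-q) ≤ l ^ p := by
    rw [hl, Real.mul_rpow hδ0.le (by positivity)]
    gcongr
    have e1 : (((2 : ℝ) ^ (q / p)) ^ k) ^ p = ((2 : ℝ) ^ k) ^ q := by
      rw [← Real.rpow_natCast, ← Real.rpow_natCast, ← Real.rpow_mul (by positivity),
        ← Real.rpow_mul (by positivity), ← Real.rpow_mul (by norm_num)]
      congr 1
      field_simp
    rw [e1, Real.rpow_neg hr0.le, ← Real.inv_rpow hr0.le]
    apply Real.rpow_le_rpow (by positivity) _ hq.le
    rw [hr, inv_div]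
    exact div_le_self (by positivity) (by norm_num)
  have hfin : δ ^ p * r ^ ((n : ℝ) - q) * (3 / 4) ≤ l ^ p * (r ^ n * (3 / 4)) := by
    rw [sub_eq_add_neg, Real.rpow_add hr0, Real.rpow_natCast]
    calc _ = (δ ^ p * r ^ (-q)) * (r ^ n * (3 / 4)) := by ring
      _ ≤ _ := by gcongr
  calc _ ≤ ENNReal.ofReal (l ^ p * (r ^ n * (3 / 4))) * ω := by gcongr
    _ = ENNReal.ofReal (l ^ p) * (ENNReal.ofReal (r ^ n * (3 / 4)) * ω) := by
        rw [ENNReal.ofReal_mul (by positivity), mul_assoc]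
    _ ≤ ENNReal.ofReal (l ^ p) * volume (S ∩ ball x r) := by gcongr
    _ = ∫⁻ y in S ∩ ball x r, ENNReal.ofReal (l ^ p) := by rw [setLIntegral_const]
    _ ≤ ∫⁻ y in S ∩ ball x r, ENNReal.ofReal (g y) ^ p := by
        apply setLIntegral_mono' (hSm.inter measurableSet_ball)
        intro y hy
        rw [← ENNReal.ofReal_rpow_of_pos hl0]
        exact ENNReal.rpow_le_rpow (ENNReal.ofReal_le_ofReal (le_of_lt hy.1)) hp.le
    _ ≤ _ := lintegral_mono_set (inter_subset_right.trans ball_subset_closedBall)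


/-- **Quantitative claim in the proof of Theorem 4.4 (ii).** If `E ⊆ cl(B)` is compact
with `H^{n-q}_∞(E) ≥ c₀` (`B` a ball of radius `1`) and `u` is smooth, compactly
supported in `2B` and `u ≥ 1` on `E`, then every Hajlasz gradient `g` of `u` satisfies
`∫ g^p ≥ c > 0`. -/
theorem content_forces_gradient_mass
    (n : ℕ) (hn : 1 ≤ n) (q p : ℝ) (hq : (n : ℝ) / (n + 1) < q) (hqp : q < p)
    (hp : p ≤ 1) (c₀ : ℝ) (hc₀ : 0 < c₀) :
    ∃ c : ℝ, 0 < c ∧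
      ∀ (x₀ : EuclideanSpace ℝ (Fin n)) (E : Set (EuclideanSpace ℝ (Fin n))),
        IsCompact E → E ⊆ closedBall x₀ 1 →
        ENNReal.ofReal c₀ ≤ hContent n ((n : ℝ) - q) E →
        ∀ u : EuclideanSpace ℝ (Fin n) → ℝ,
          ContDiff ℝ (⊤ : ℕ∞) u → HasCompactSupport u → tsupport u ⊆ ball x₀ 2 →
          (∀ x ∈ E, 1 ≤ u x) →
          ∀ g : EuclideanSpace ℝ (Fin n) → ℝ, IsHajlaszGradientOn n u g univ →
            ENNReal.ofReal c ≤ ∫⁻ x, ENNReal.ofReal (g x) ^ p := by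
  have hq0 : 0 < q := lt_of_le_of_lt (by positivity) hq
  have hp0 : 0 < p := hq0.trans hqp
  have hn1 : (1 : ℝ) ≤ n := by exact_mod_cast hn
  have hs : 0 < (n : ℝ) - q := by linarith
  set ω := volume (ball (0 : EuclideanSpace ℝ (Fin n)) 1) with hω
  have hωt : ω ≠ ⊤ := measure_ball_lt_top.ne
  have hω0 : 0 < ω.toReal := ENNReal.toReal_pos (measure_ball_pos _ _ one_pos).ne' hωt
  set δ : ℝ := (1 - (2 : ℝ) ^ (q / p - 1)) / 192 with hδ
  have hδ0 : 0 < δ := by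
    have hθ : q / p < 1 := (div_lt_one hp0).2 hqp
    have : (2 : ℝ) ^ (q / p - 1) < 1 :=
      Real.rpow_lt_one_of_one_lt_of_neg (by norm_num) (by linarith)
    rw [hδ]; linarith
  set K : ℝ := δ ^ p * (3 / 4) * ω.toReal / 6 ^ ((n : ℝ) - q) with hK
  have hK0 : 0 < K := by positivity
  refine ⟨c₀ * K, by positivity, ?_⟩
  intro x₀ E _ hEB hE u hu _ hsupp huE g ⟨hgm, _, N, hN0, hN⟩
  have hmass : ∀ x ∈ E, ∃ r : ℝ, 0 < r ∧ r ≤ 12 ∧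
      ENNReal.ofReal ((6 * r) ^ ((n : ℝ) - q)) * ENNReal.ofReal K
        ≤ ∫⁻ y in closedBall x r, ENNReal.ofReal (g y) ^ p := by
    intro x hx
    obtain ⟨r, hr0, hr1, hr⟩ := exists_mass_scale n hn q p hq0 hqp u g hu.continuous hgm N hN0
      (fun a ha b hb => hN a ⟨mem_univ _, ha⟩ b ⟨mem_univ _, hb⟩) x (huE x hx) (by
        intro y hy
        by_contra h
        have h1 := mem_ball.1 (hsupp (subset_tsupport u h))
        have h2 := mem_closedBall.1 (hEB hx)
        have h3 := dist_triangle_right y x x₀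
        linarith)
    refine ⟨r, hr0, hr1, le_trans (le_of_eq ?_) hr⟩
    rw [← hω, ← ENNReal.ofReal_toReal hωt, ← ENNReal.ofReal_mul (by positivity),
      ← ENNReal.ofReal_mul (by positivity), ← hδ, hK, Real.mul_rpow (by norm_num) hr0.le]
    congr 1
    have : (6 : ℝ) ^ ((n : ℝ) - q) ≠ 0 := by positivity
    field_simp
  choose! r hr0 hr1 hr using hmass
  obtain ⟨v, hvE, hvd, hvc⟩ := Vitali.exists_disjoint_subfamily_covering_enlargement_closedBall
    E id r 12 hr1 5 (by norm_num)
  have hvcount : v.Countable := hvd.countable_of_nonempty_interior (by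
    intro i hi
    exact ⟨i, ball_subset_interior_closedBall (mem_ball_self (hr0 i (hvE hi)))⟩)
  have : Countable v := hvcount.to_subtype
  have hcont : hContent n ((n : ℝ) - q) E
      ≤ ∑' i : v, ENNReal.ofReal ((6 * r i) ^ ((n : ℝ) - q)) := by
    refine hContent_le_tsum n _ hs E (fun i : v => (i : EuclideanSpace ℝ (Fin n)))
      (fun i => 6 * r i) (fun i => by have := hr0 i (hvE i.2); positivity) ?_
    intro a ha
    obtain ⟨b, hb, hab⟩ := hvc a ha
    refine mem_iUnion.2 ⟨⟨b, hb⟩, ?_⟩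
    have h1 := mem_closedBall.1 (hab (mem_closedBall_self (hr0 a ha).le))
    have h2 := hr0 b (hvE hb)
    simp only [id] at h1
    rw [mem_ball]
    linarith
  calc ENNReal.ofReal (c₀ * K) = ENNReal.ofReal c₀ * ENNReal.ofReal K :=
        ENNReal.ofReal_mul hc₀.le
    _ ≤ (∑' i : v, ENNReal.ofReal ((6 * r i) ^ ((n : ℝ) - q))) * ENNReal.ofReal K := by
        gcongr
        exact hE.trans hcont
    _ = ∑' i : v, ENNReal.ofReal ((6 * r i) ^ ((n : ℝ) - q)) * ENNReal.ofReal K :=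
        ENNReal.tsum_mul_right.symm
    _ ≤ ∑' i : v, ∫⁻ y in closedBall (i : EuclideanSpace ℝ (Fin n)) (r i),
          ENNReal.ofReal (g y) ^ p := ENNReal.tsum_le_tsum fun i => hr i (hvE i.2)
    _ = ∫⁻ y in ⋃ i ∈ v, closedBall i (r i), ENNReal.ofReal (g y) ^ p :=
        (lintegral_biUnion hvcount (fun _ _ => measurableSet_closedBall) hvd _).symm
    _ ≤ _ := setLIntegral_le_lintegral _ _
end
end

section
/- Let h : ℝ → [0,∞) be an integrable function which is even (h(−t) = h(t) for all t) and has support contained in [−2,2], and define u : ℝ → ℝ by u(x) = ∫_0^x h(t) dt. If g : ℝ → [0,∞] is a Hajlasz gradient of u on ℝ, then for almost every x > 0 one has |u(x)| ≤ x·(g(x) + g(−x)). In particular, if moreover g ∈ L¹(ℝ), then ∫_0^2 (u(x)/x) dx < ∞. -/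
open MeasureTheory Metric Set ENNReal NNReal

noncomputable section

/-- `g` is a Hajlasz gradient of `u` on `ℝ`: `g` is measurable, nonnegative, and off a
set of measure zero `|u x - u y| ≤ |x - y| (g x + g y)`. -/
def IsHajlaszGradientR (u g : ℝ → ℝ) : Prop :=
  Measurable g ∧ (∀ x, 0 ≤ g x) ∧
    ∃ E : Set ℝ, volume E = 0 ∧
      ∀ x ∉ E, ∀ y ∉ E, |u x - u y| ≤ |x - y| * (g x + g y)

/-- **Example 4.1.** Let `h ∈ L¹(ℝ)` be nonnegative, even, supported in `[-2,2]`, and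
`u(x) = ∫_0^x h`. Any Hajlasz gradient `g` of `u` satisfies `|u(x)| ≤ x (g(x) + g(-x))`
for a.e. `x > 0`; in particular if `g ∈ L¹(ℝ)` then `∫_0^2 u(x)/x dx < ∞`. -/
theorem hajlasz_gradient_forces_hardy_on_line
    (h : ℝ → ℝ) (hint : Integrable h) (hpos : ∀ t, 0 ≤ h t)
    (heven : ∀ t, h (-t) = h t) (hsupp : Function.support h ⊆ Icc (-2 : ℝ) 2)
    (u : ℝ → ℝ) (hu : ∀ x, u x = ∫ t in (0 : ℝ)..x, h t)
    (g : ℝ → ℝ) (hg : IsHajlaszGradientR u g) :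
    (∀ᵐ x ∂(volume : Measure ℝ), 0 < x → |u x| ≤ x * (g x + g (-x))) ∧
      ((∫⁻ x, ENNReal.ofReal (g x)) ≠ ⊤ →
        ∫⁻ x in Ioo (0 : ℝ) 2, ENNReal.ofReal (u x / x) ≠ ⊤) := by
  obtain ⟨hgm, hg0, E, hE, hH⟩ := hg
  have hodd : ∀ x, u (-x) = - u x := by
    intro x
    have h1 := intervalIntegral.integral_comp_neg (a := 0) (b := x) (fun t => h t)
    simp only [heven, neg_zero] at h1
    rw [hu, hu, h1, intervalIntegral.integral_symm]
  have hE1 : ∀ᵐ x ∂(volume : Measure ℝ), x ∉ E := measure_eq_zero_iff_ae_notMem.mp hE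
  have hE2 : ∀ᵐ x ∂(volume : Measure ℝ), -x ∉ E :=
    (Measure.measurePreserving_neg (volume : Measure ℝ)).quasiMeasurePreserving.ae hE1
  have key : ∀ᵐ x ∂(volume : Measure ℝ), 0 < x → |u x| ≤ x * (g x + g (-x)) := by
    filter_upwards [hE1, hE2] with x h1 h2 hx
    have h3 := hH x h1 (-x) h2
    rw [hodd, sub_neg_eq_add, sub_neg_eq_add, ← two_mul, ← two_mul, abs_mul, abs_mul,
      abs_of_pos hx, abs_of_pos (two_pos : (0 : ℝ) < 2)] at h3
    linarith
  refine ⟨key, fun hfin => ?_⟩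
  have hneg : ∫⁻ x, ENNReal.ofReal (g (-x)) = ∫⁻ x, ENNReal.ofReal (g x) :=
    (Measure.measurePreserving_neg (volume : Measure ℝ)).lintegral_comp
      (f := fun x => ENNReal.ofReal (g x)) hgm.ennreal_ofReal
  have hle : (∫⁻ x in Ioo (0 : ℝ) 2, ENNReal.ofReal (u x / x)) ≤
      ∫⁻ x, (ENNReal.ofReal (g x) + ENNReal.ofReal (g (-x))) := by
    refine le_trans (lintegral_mono_ae ?_) (setLIntegral_le_lintegral (Ioo (0 : ℝ) 2) _)
    filter_upwards [ae_restrict_of_ae key, ae_restrict_mem measurableSet_Ioo] with x h1 hx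
    rw [← ENNReal.ofReal_add (hg0 _) (hg0 _)]
    apply ENNReal.ofReal_le_ofReal
    rw [div_le_iff₀ hx.1]
    have := h1 hx.1
    have := le_abs_self (u x)
    linarith
  refine ne_top_of_le_ne_top ?_ hle
  rw [lintegral_add_left hgm.ennreal_ofReal, hneg]
  exact ENNReal.add_ne_top.mpr ⟨hfin, hfin⟩
end
end

section
/- Let n ≥ 1. There is a constant C = C(n) such that for every ball B ⊆ ℝⁿ of radius r, every u ∈ L¹(2B), and every Hajlasz gradient g of u on 2B, one has ⨍_B |u − u_B| dm ≤ C · r · ( ⨍_{2B} g^{n/(n+1)} dm )^{(n+1)/n}, where u_B = ⨍_B u dm, ⨍ denotes the average (the integral divided by the Lebesgue measure of the domain of integration), and 2B is the ball concentric with B of twice the radius. -/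
open MeasureTheory Metric Set ENNReal NNReal

noncomputable section

/-- Oscillation about the mean is at most twice the oscillation about any constant. -/
lemma hajlasz_avg_le {n : ℕ} (x₀ : EuclideanSpace ℝ (Fin n)) (r : ℝ) (hr : 0 < r)
    (u : EuclideanSpace ℝ (Fin n) → ℝ) (hu : IntegrableOn u (ball x₀ r)) (c : ℝ) :
    ∫⁻ y in ball x₀ r, ENNReal.ofReal |u y - ⨍ z in ball x₀ r, u z| ≤
      2 * ∫⁻ y in ball x₀ r, ENNReal.ofReal |u y - c| := by
  have hV0 : volume (ball x₀ r) ≠ 0 := (measure_ball_pos volume x₀ hr).ne'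
  have hVt : volume (ball x₀ r) ≠ ⊤ := measure_ball_lt_top.ne
  have : IsFiniteMeasure (volume.restrict (ball x₀ r)) :=
    ⟨by simpa using measure_ball_lt_top⟩
  have : NeZero (volume.restrict (ball x₀ r)) :=
    ⟨by simpa using hV0⟩
  set m := ⨍ z in ball x₀ r, u z with hm
  have hmc : m - c = ⨍ z in ball x₀ r, (u z - c) := by
    rw [average_eq, integral_sub hu (integrable_const c), smul_sub, ← average_eq, ← average_eq,
      average_const]
  have h1 : ENNReal.ofReal |m - c| ≤
      (volume (ball x₀ r))⁻¹ * ∫⁻ y in ball x₀ r, ENNReal.ofReal |u y - c| := by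
    have := enorm_integral_le_lintegral_enorm
      (μ := ((volume.restrict (ball x₀ r)) univ)⁻¹ • volume.restrict (ball x₀ r))
      (fun z => u z - c)
    rw [lintegral_smul_measure] at this
    rw [hmc]
    simpa [average, Real.enorm_eq_ofReal_abs] using this
  calc ∫⁻ y in ball x₀ r, ENNReal.ofReal |u y - m|
      ≤ ∫⁻ y in ball x₀ r, (ENNReal.ofReal |u y - c| + ENNReal.ofReal |m - c|) := by
        refine lintegral_mono fun y => ?_
        rw [← ENNReal.ofReal_add (abs_nonneg _) (abs_nonneg _)]
        refine ENNReal.ofReal_le_ofReal ?_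
        rw [abs_sub_comm m c]
        exact abs_sub_le _ _ _
    _ = (∫⁻ y in ball x₀ r, ENNReal.ofReal |u y - c|) +
          ENNReal.ofReal |m - c| * volume (ball x₀ r) := by
        rw [lintegral_add_right _ measurable_const, setLIntegral_const]
    _ ≤ (∫⁻ y in ball x₀ r, ENNReal.ofReal |u y - c|) +
          ((volume (ball x₀ r))⁻¹ * ∫⁻ y in ball x₀ r, ENNReal.ofReal |u y - c|) *
            volume (ball x₀ r) := by gcongr
    _ = _ := by
        rw [mul_comm (volume (ball x₀ r))⁻¹, mul_assoc, ENNReal.inv_mul_cancel hV0 hVt, mul_one,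
          two_mul]

/-- Chebyshev step of the chain. -/
lemma hajlasz_step {n : ℕ} (x₀ x : EuclideanSpace ℝ (Fin n)) (r ρ p t : ℝ) 
    (hp : 0 < p) (ht : 0 < t)
    (g : EuclideanSpace ℝ (Fin n) → ℝ)
    (E : Set (EuclideanSpace ℝ (Fin n))) (hE : volume E = 0)
    (hsub : ball x ρ ⊆ ball x₀ (2 * r))
    (hI : ∫⁻ y in ball x₀ (2 * r), ENNReal.ofReal (g y) ^ p <
      ENNReal.ofReal (t ^ p) * volume (ball x ρ)) :
    ∃ y ∈ ball x ρ, y ∉ E ∧ g y ≤ t := by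
  by_contra! hcon
  have h1 : ∀ᵐ y ∂(volume.restrict (ball x ρ)), ENNReal.ofReal (t ^ p) ≤ ENNReal.ofReal (g y) ^ p := by
    have hE' : ∀ᵐ y ∂(volume : Measure (EuclideanSpace ℝ (Fin n))), y ∉ E :=
      measure_eq_zero_iff_ae_notMem.1 hE
    filter_upwards [ae_restrict_of_ae hE', ae_restrict_mem measurableSet_ball] with y hy hyb
    rw [← ENNReal.ofReal_rpow_of_pos ht]
    have := hcon y hyb hy
    gcongr
  have h2 : ENNReal.ofReal (t ^ p) * volume (ball x ρ) ≤
      ∫⁻ y in ball x ρ, ENNReal.ofReal (g y) ^ p := by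
    rw [← setLIntegral_const]
    exact lintegral_mono_ae h1
  have h3 := h2.trans (lintegral_mono_set hsub)
  exact absurd hI (not_lt.2 h3)

/-- The chain argument. -/
lemma hajlasz_chain {n : ℕ} (x₀ : EuclideanSpace ℝ (Fin n)) (r p τ σ lam D : ℝ)
    (hr : 0 < r) (hp : 0 < p) (hτ0 : 0 < τ) (hτ1 : τ < 1) (hσ : σ = 2 * τ) (hσ2 : σ = 2 ^ p)
    (hτσ : τ ^ n * σ = 1) (hlam : 0 < lam) (hD : 3 * (1 - τ) ≤ D * (σ - 1)) (hD0 : 0 ≤ D)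
    (u g : EuclideanSpace ℝ (Fin n) → ℝ) (hg : Measurable g)
    (E : Set (EuclideanSpace ℝ (Fin n))) (hE : volume E = 0)
    (hug : ∀ x ∈ ball x₀ (2 * r) \ E, ∀ y ∈ ball x₀ (2 * r) \ E,
      |u x - u y| ≤ ‖x - y‖ * (g x + g y))
    (hI : ∫⁻ y in ball x₀ (2 * r), ENNReal.ofReal (g y) ^ p ≤
      ENNReal.ofReal ((1 - τ) ^ n / 2 * r ^ n * lam ^ p) *
        volume (ball (0 : EuclideanSpace ℝ (Fin n)) 1)) (k : ℕ) :
    ∀ x, dist x x₀ < r * (1 + τ ^ k) → x ∉ E → g x ≤ 2 ^ k * lam →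
      ∃ z ∈ ball x₀ (2 * r) \ E, g z ≤ lam ∧ |u x - u z| ≤ D * r * lam * σ ^ k := by
  induction k with
  | zero =>
    intro x hx hxE hgx
    refine ⟨x, ⟨?_, hxE⟩, by simpa using hgx, ?_⟩
    · rw [mem_ball]; simp at hx; linarith
    · simp; positivity
  | succ k ih =>
    intro x hx hxE hgx
    have hκ : 0 < 1 - τ := by linarith
    have hτk : 0 < τ ^ k := by positivity
    have hτk1 : τ ^ k ≤ 1 := pow_le_one₀ hτ0.le hτ1.le
    have hρ : 0 < r * (1 - τ) * τ ^ k := by positivity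
    have hsub' : ∀ y ∈ ball x (r * (1 - τ) * τ ^ k), dist y x₀ < r * (1 + τ ^ k) := by
      intro y hy
      rw [mem_ball] at hy
      calc dist y x₀ ≤ dist y x + dist x x₀ := dist_triangle _ _ _
        _ < r * (1 - τ) * τ ^ k + r * (1 + τ ^ (k + 1)) := add_lt_add hy hx
        _ = r * (1 + τ ^ k) := by ring
    have hle2 : r * (1 + τ ^ k) ≤ 2 * r := by nlinarith
    have hV0 : volume (ball (0 : EuclideanSpace ℝ (Fin n)) 1) ≠ 0 :=
      (measure_ball_pos volume _ one_pos).ne'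
    have hVt : volume (ball (0 : EuclideanSpace ℝ (Fin n)) 1) ≠ ⊤ := measure_ball_lt_top.ne
    have hσk : ((2:ℝ) ^ k) ^ p = σ ^ k := by
      rw [hσ2, ← Real.rpow_natCast, ← Real.rpow_mul two_pos.le, mul_comm, Real.rpow_mul two_pos.le,
        Real.rpow_natCast]
    have hστk : σ ^ k * (τ ^ k) ^ n = 1 := by
      rw [← pow_mul, mul_comm k n, pow_mul, ← mul_pow, mul_comm, hτσ, one_pow]
    obtain ⟨y, hy, hyE, hgy⟩ := hajlasz_step x₀ x r (r * (1 - τ) * τ ^ k) p (2 ^ k * lam) hp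
      (by positivity) g E hE
      (fun y hy => by rw [mem_ball]; exact (hsub' y hy).trans_le hle2)
      (by
        refine hI.trans_lt ?_
        rw [Measure.addHaar_ball_of_pos volume x hρ, ← mul_assoc, finrank_euclideanSpace_fin,
          ← ENNReal.ofReal_mul (by positivity)]
        refine (ENNReal.mul_lt_mul_iff_left hV0 hVt).2 ?_
        have : (2 ^ k * lam) ^ p * (r * (1 - τ) * τ ^ k) ^ n = (1 - τ) ^ n * r ^ n * lam ^ p := by
          rw [Real.mul_rpow (by positivity) hlam.le, hσk, mul_pow, mul_pow]
          linear_combination (lam ^ p * r ^ n * (1 - τ) ^ n) * hστk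
        rw [this]
        have hpos : 0 < (1 - τ) ^ n * r ^ n * lam ^ p := by positivity
        refine (ENNReal.ofReal_lt_ofReal_iff hpos).2 ?_
        nlinarith)
    obtain ⟨z, hz, hgz, huz⟩ := ih y (hsub' y hy) hyE hgy
    refine ⟨z, hz, hgz, ?_⟩
    have hx2 : x ∈ ball x₀ (2 * r) := by
      rw [mem_ball]; refine hx.trans_le ?_
      have : τ ^ (k + 1) ≤ 1 := pow_le_one₀ hτ0.le hτ1.le
      nlinarith
    have hy2 : y ∈ ball x₀ (2 * r) := by rw [mem_ball]; exact (hsub' y hy).trans_le hle2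
    have hxy := hug x ⟨hx2, hxE⟩ y ⟨hy2, hyE⟩
    have hn : ‖x - y‖ ≤ r * (1 - τ) * τ ^ k := by
      rw [← dist_eq_norm, dist_comm]; exact (mem_ball.1 hy).le
    have hsum : g x + g y ≤ 3 * 2 ^ k * lam := by rw [pow_succ] at hgx; linarith
    have h1 : |u x - u y| ≤ 3 * (1 - τ) * r * lam * σ ^ k := by
      refine hxy.trans ((mul_le_mul_of_nonneg_left hsum (norm_nonneg _)).trans
        ((mul_le_mul_of_nonneg_right hn (by positivity)).trans (le_of_eq ?_)))
      rw [hσ, mul_pow]; ring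
    have hσ0 : 0 < σ := by rw [hσ]; positivity
    calc |u x - u z| ≤ |u x - u y| + |u y - u z| := abs_sub_le _ _ _
      _ ≤ 3 * (1 - τ) * r * lam * σ ^ k + D * r * lam * σ ^ k := add_le_add h1 huz
      _ = (3 * (1 - τ)) * (r * lam * σ ^ k) + D * r * lam * σ ^ k := by ring
      _ ≤ (D * (σ - 1)) * (r * lam * σ ^ k) + D * r * lam * σ ^ k := by gcongr
      _ = _ := by ring

/-- The main estimate at a level `lam`. -/
lemma hajlasz_main {n : ℕ} (x₀ : EuclideanSpace ℝ (Fin n)) (r p τ σ lam D : ℝ)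
    (hr : 0 < r) (hp : 0 < p) (hτ0 : 0 < τ) (hτ1 : τ < 1) (hσ : σ = 2 * τ) (hσ2 : σ = 2 ^ p)
    (hτσ : τ ^ n * σ = 1) (hlam : 0 < lam) (hD : 3 * (1 - τ) ≤ D * (σ - 1)) (hD0 : 0 ≤ D)
    (u g : EuclideanSpace ℝ (Fin n) → ℝ) (hu : IntegrableOn u (ball x₀ (2 * r)))
    (hg : Measurable g) (hg0 : ∀ x, 0 ≤ g x)
    (E : Set (EuclideanSpace ℝ (Fin n))) (hE : volume E = 0)
    (hug : ∀ x ∈ ball x₀ (2 * r) \ E, ∀ y ∈ ball x₀ (2 * r) \ E,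
      |u x - u y| ≤ ‖x - y‖ * (g x + g y))
    (hI : ∫⁻ y in ball x₀ (2 * r), ENNReal.ofReal (g y) ^ p ≤
      ENNReal.ofReal ((1 - τ) ^ n / 2 * r ^ n * lam ^ p) *
        volume (ball (0 : EuclideanSpace ℝ (Fin n)) 1)) :
    (volume (ball x₀ r))⁻¹ *
      ∫⁻ y in ball x₀ r, ENNReal.ofReal |u y - ⨍ z in ball x₀ r, u z| ≤
    ENNReal.ofReal (2 * (8 + D + D * σ * ((1 - τ) ^ n / 2)) * r * lam) := by
  have hσ0 : 0 < σ := by rw [hσ]; positivity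
  have hκ : 0 < 1 - τ := by linarith
  have hV0 : volume (ball x₀ r) ≠ 0 := (measure_ball_pos volume x₀ hr).ne'
  have hVt : volume (ball x₀ r) ≠ ⊤ := measure_ball_lt_top.ne
  have hchain := hajlasz_chain x₀ r p τ σ lam D hr hp hτ0 hτ1 hσ hσ2 hτσ hlam hD hD0 u g hg E hE
    hug hI
  -- pointwise bound to a good point
  have hpt : ∀ x ∈ ball x₀ r, x ∉ E → ∃ z ∈ ball x₀ (2 * r) \ E, g z ≤ lam ∧
      |u x - u z| ≤ D * r * lam * (1 + σ * (lam ^ p)⁻¹ * g x ^ p) := by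
    intro x hx hxE
    have hex : ∃ k : ℕ, g x ≤ 2 ^ k * lam := by
      obtain ⟨k, hk⟩ := pow_unbounded_of_one_lt (g x / lam) (one_lt_two : (1:ℝ) < 2)
      exact ⟨k, ((div_lt_iff₀ hlam).1 hk).le⟩
    classical
    obtain ⟨z, hz, hgz, huz⟩ := hchain (Nat.find hex) x
      (by
        rw [mem_ball] at hx
        refine hx.trans_le ?_
        have : 0 < τ ^ (Nat.find hex) := by positivity
        nlinarith) hxE (Nat.find_spec hex)
    refine ⟨z, hz, hgz, huz.trans ?_⟩
    gcongr
    have hgp : 0 ≤ g x ^ p := Real.rpow_nonneg (hg0 x) p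
    have hlp : 0 < lam ^ p := by positivity
    rcases hk : Nat.find hex with _ | m
    · have : 0 ≤ σ * (lam ^ p)⁻¹ * g x ^ p := by positivity
      simpa using this
    · have hm : 2 ^ m * lam < g x := not_le.1 (Nat.find_min hex (m := m) (by omega))
      have h2 : (2 ^ m * lam) ^ p ≤ g x ^ p := Real.rpow_le_rpow (by positivity) hm.le hp.le
      have hσk : ((2:ℝ) ^ m) ^ p = σ ^ m := by
        rw [hσ2, ← Real.rpow_natCast, ← Real.rpow_mul two_pos.le, mul_comm,
          Real.rpow_mul two_pos.le, Real.rpow_natCast]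
      rw [Real.mul_rpow (by positivity) hlam.le, hσk] at h2
      have h3 : σ ^ m ≤ (lam ^ p)⁻¹ * g x ^ p := by
        rw [inv_mul_eq_div, le_div_iff₀ hlp]; exact h2
      calc σ ^ (m + 1) = σ * σ ^ m := by ring
        _ ≤ σ * ((lam ^ p)⁻¹ * g x ^ p) := by gcongr
        _ ≤ _ := by rw [mul_assoc]; linarith
  -- a base point
  have hEae : ∀ᵐ y ∂(volume : Measure (EuclideanSpace ℝ (Fin n))), y ∉ E :=
    measure_eq_zero_iff_ae_notMem.1 hE
  obtain ⟨w, hw, hwE⟩ : ∃ w ∈ ball x₀ r, w ∉ E := by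
    by_contra! hcon
    exact hV0 (measure_mono_null hcon hE)
  obtain ⟨z₀, hz₀, hgz₀, -⟩ := hpt w hw hwE
  have hpt2 : ∀ x ∈ ball x₀ r, x ∉ E →
      |u x - u z₀| ≤ (8 + D) * r * lam + (D * σ * r * lam * (lam ^ p)⁻¹) * g x ^ p := by
    intro x hx hxE
    obtain ⟨z, hz, hgz, huz⟩ := hpt x hx hxE
    have h1 := hug z hz z₀ hz₀
    have h2 : ‖z - z₀‖ ≤ 4 * r := by
      rw [← dist_eq_norm]
      have a := mem_ball.1 hz.1
      have b := mem_ball.1 hz₀.1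
      have := dist_triangle_right z z₀ x₀
      linarith
    have h3 : |u z - u z₀| ≤ 8 * r * lam := by
      refine h1.trans ?_
      calc ‖z - z₀‖ * (g z + g z₀) ≤ (4 * r) * (lam + lam) := by
            apply mul_le_mul h2 (add_le_add hgz hgz₀) (add_nonneg (hg0 _) (hg0 _)) (by positivity)
        _ = _ := by ring
    have := abs_sub_le (u x) (u z) (u z₀)
    nlinarith
  have hint : ∫⁻ y in ball x₀ r, ENNReal.ofReal |u y - u z₀| ≤
      ENNReal.ofReal ((8 + D + D * σ * ((1 - τ) ^ n / 2)) * r * lam) * volume (ball x₀ r) := by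
    calc ∫⁻ y in ball x₀ r, ENNReal.ofReal |u y - u z₀|
        ≤ ∫⁻ y in ball x₀ r, (ENNReal.ofReal ((8 + D) * r * lam) +
            ENNReal.ofReal (D * σ * r * lam * (lam ^ p)⁻¹) * ENNReal.ofReal (g y) ^ p) := by
          refine lintegral_mono_ae ?_
          filter_upwards [ae_restrict_of_ae hEae, ae_restrict_mem measurableSet_ball] with y hy hyb
          refine (ENNReal.ofReal_le_ofReal (hpt2 y hyb hy)).trans (le_of_eq ?_)
          rw [ENNReal.ofReal_add (by positivity)
            (mul_nonneg (by positivity) (Real.rpow_nonneg (hg0 y) p)),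
            ENNReal.ofReal_mul (q := g y ^ p) (by positivity), ENNReal.ofReal_rpow_of_nonneg (hg0 y) hp.le]
      _ = ENNReal.ofReal ((8 + D) * r * lam) * volume (ball x₀ r) +
            ENNReal.ofReal (D * σ * r * lam * (lam ^ p)⁻¹) *
              ∫⁻ y in ball x₀ r, ENNReal.ofReal (g y) ^ p := by
          rw [lintegral_add_left measurable_const, setLIntegral_const, lintegral_const_mul]
          fun_prop
      _ ≤ ENNReal.ofReal ((8 + D) * r * lam) * volume (ball x₀ r) +
            ENNReal.ofReal (D * σ * r * lam * (lam ^ p)⁻¹) *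
              (ENNReal.ofReal ((1 - τ) ^ n / 2 * r ^ n * lam ^ p) *
                volume (ball (0 : EuclideanSpace ℝ (Fin n)) 1)) := by
          gcongr
          exact (lintegral_mono_set (ball_subset_ball (by linarith))).trans hI
      _ = ENNReal.ofReal ((8 + D) * r * lam) * volume (ball x₀ r) +
            ENNReal.ofReal (D * σ * ((1 - τ) ^ n / 2) * r * lam) * volume (ball x₀ r) := by
          congr 1
          rw [Measure.addHaar_ball_of_pos volume x₀ hr, finrank_euclideanSpace_fin, ← mul_assoc,
            ← mul_assoc, ← ENNReal.ofReal_mul (by positivity), ← ENNReal.ofReal_mul (by positivity)]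
          congr 2
          have hlp : lam ^ p ≠ 0 := by positivity
          field_simp
      _ = _ := by
          rw [← add_mul, ← ENNReal.ofReal_add (by positivity) (by positivity)]
          congr 2; ring
  have hav := hajlasz_avg_le x₀ r hr u (hu.mono_set (ball_subset_ball (by linarith))) (u z₀)
  calc _ ≤ (volume (ball x₀ r))⁻¹ * (2 * (ENNReal.ofReal
        ((8 + D + D * σ * ((1 - τ) ^ n / 2)) * r * lam) * volume (ball x₀ r))) := by
        gcongr; exact hav.trans (by gcongr)
    _ = 2 * ENNReal.ofReal ((8 + D + D * σ * ((1 - τ) ^ n / 2)) * r * lam) *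
          ((volume (ball x₀ r))⁻¹ * volume (ball x₀ r)) := by ring
    _ = _ := by
        rw [ENNReal.inv_mul_cancel hV0 hVt, mul_one, ← ENNReal.ofReal_ofNat 2,
          ← ENNReal.ofReal_mul (by norm_num)]
        congr 1; ring

/-- **Inequality (2.60).** Mean-oscillation Poincaré inequality for Hajlasz gradients:
`⨍_B |u - u_B| ≤ C r (⨍_{2B} g^{n/(n+1)})^{(n+1)/n}`. -/
theorem mean_oscillation_poincare_hajlasz (n : ℕ) (hn : 1 ≤ n) :
    ∃ C : ℝ, 0 < C ∧
      ∀ (x₀ : EuclideanSpace ℝ (Fin n)) (r : ℝ), 0 < r →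
        ∀ u : EuclideanSpace ℝ (Fin n) → ℝ, IntegrableOn u (ball x₀ (2 * r)) →
          ∀ g : EuclideanSpace ℝ (Fin n) → ℝ,
            IsHajlaszGradientOn n u g (ball x₀ (2 * r)) →
            (volume (ball x₀ r))⁻¹ *
                ∫⁻ y in ball x₀ r, ENNReal.ofReal |u y - ⨍ z in ball x₀ r, u z| ≤
              ENNReal.ofReal (C * r) *
                ((volume (ball x₀ (2 * r)))⁻¹ *
                    ∫⁻ y in ball x₀ (2 * r),
                      ENNReal.ofReal (g y) ^ ((n : ℝ) / (n + 1))) ^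
                  ((n + 1 : ℝ) / n) := by
  have hn0 : (0 : ℝ) < n := by exact_mod_cast hn
  set p : ℝ := (n : ℝ) / (n + 1) with hpdef
  have hp : 0 < p := by positivity
  have hpinv : ((n + 1 : ℝ) / n) = p⁻¹ := by rw [hpdef, inv_div]
  rw [hpinv]
  set τ : ℝ := 2 ^ (-(1 / ((n : ℝ) + 1))) with hτ
  set σ : ℝ := 2 ^ p with hσ2
  have hτ0 : 0 < τ := by positivity
  have hτ1 : τ < 1 := Real.rpow_lt_one_of_one_lt_of_neg one_lt_two (by
    have : 0 < 1 / ((n : ℝ) + 1) := by positivity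
    linarith)
  have hσ1 : 1 < σ := Real.one_lt_rpow one_lt_two hp
  have hσ : σ = 2 * τ := by
    rw [hσ2, hτ]
    nth_rewrite 2 [← Real.rpow_one 2]
    rw [← Real.rpow_add two_pos]
    congr 1
    rw [hpdef]; field_simp; ring
  have hτσ : τ ^ n * σ = 1 := by
    rw [hσ2, hτ, ← Real.rpow_natCast, ← Real.rpow_mul two_pos.le, ← Real.rpow_add two_pos]
    have : -(1 / ((n : ℝ) + 1)) * n + p = 0 := by rw [hpdef]; field_simp; ring
    rw [this, Real.rpow_zero]
  have hκ : 0 < 1 - τ := by linarith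
  have hσm : 0 < σ - 1 := by linarith
  set D : ℝ := 3 * (1 - τ) / (σ - 1) with hDdef
  have hD0 : 0 ≤ D := by positivity
  have hD : 3 * (1 - τ) ≤ D * (σ - 1) := by rw [hDdef, div_mul_cancel₀ _ hσm.ne']
  set K : ℝ := 2 * (8 + D + D * σ * ((1 - τ) ^ n / 2)) with hK
  have hσ0 : 0 < σ := by positivity
  have hK0 : 0 < K := by positivity
  set c : ℝ := (1 - τ) ^ n / 2 with hc
  have hc0 : 0 < c := by positivity
  set L : ℝ := (2 ^ n / c) ^ p⁻¹ with hL
  have hL0 : 0 < L := by positivity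
  refine ⟨K * L, by positivity, ?_⟩
  intro x₀ r hr u hu g hgrad
  obtain ⟨hg, hg0, E, hE, hug⟩ := hgrad
  have hV0 : volume (ball x₀ (2 * r)) ≠ 0 := (measure_ball_pos volume x₀ (by positivity)).ne'
  have hVt : volume (ball x₀ (2 * r)) ≠ ⊤ := measure_ball_lt_top.ne
  set I := ∫⁻ y in ball x₀ (2 * r), ENNReal.ofReal (g y) ^ p with hI
  set X := (volume (ball x₀ (2 * r)))⁻¹ * I with hX
  have hIX : I = X * volume (ball x₀ (2 * r)) := by
    rw [hX, mul_comm, ← mul_assoc, ENNReal.mul_inv_cancel hV0 hVt, one_mul]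
  by_cases hXt : X = ⊤
  · rw [hXt, ENNReal.top_rpow_of_pos (by positivity), ENNReal.mul_top]
    · exact le_top
    · exact (ENNReal.ofReal_pos.2 (by positivity)).ne'
  have key : ∀ ε : ℝ, 0 < ε → (volume (ball x₀ r))⁻¹ *
      ∫⁻ y in ball x₀ r, ENNReal.ofReal |u y - ⨍ z in ball x₀ r, u z| ≤
      ENNReal.ofReal (K * r * (L * (X.toReal + ε) ^ p⁻¹)) := by
    intro ε hε
    have hXε : 0 < X.toReal + ε := add_pos_of_nonneg_of_pos ENNReal.toReal_nonneg hε
    refine hajlasz_main x₀ r p τ σ (L * (X.toReal + ε) ^ p⁻¹) D hr hp hτ0 hτ1 hσ hσ2 hτσ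
      (by positivity) hD hD0 u g hu hg hg0 E hE hug ?_
    rw [← hI, hIX, Measure.addHaar_ball_of_pos volume x₀ (by positivity : 0 < 2 * r), finrank_euclideanSpace_fin,
      ← mul_assoc]
    gcongr
    nth_rewrite 1 [← ENNReal.ofReal_toReal hXt]
    rw [← ENNReal.ofReal_mul ENNReal.toReal_nonneg]
    refine ENNReal.ofReal_le_ofReal ?_
    rw [Real.mul_rpow hL0.le (by positivity), hL, Real.rpow_inv_rpow (by positivity) hp.ne',
      Real.rpow_inv_rpow hXε.le hp.ne', mul_pow]
    have : c * r ^ n * (2 ^ n / c * (X.toReal + ε)) = (X.toReal + ε) * (2 ^ n * r ^ n) := by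
      field_simp
    rw [← hc, this]
    gcongr
    linarith
  have hrhs : ENNReal.ofReal (K * L * r) * X ^ p⁻¹ =
      ENNReal.ofReal (K * r * (L * (X.toReal + 0) ^ p⁻¹)) := by
    nth_rewrite 1 [← ENNReal.ofReal_toReal hXt]
    rw [ENNReal.ofReal_rpow_of_nonneg ENNReal.toReal_nonneg (by positivity),
      ← ENNReal.ofReal_mul (by positivity), add_zero]
    congr 1; ring
  rw [hrhs]
  have hcont : Continuous fun ε : ℝ =>
      ENNReal.ofReal (K * r * (L * (X.toReal + ε) ^ p⁻¹)) := by
    refine ENNReal.continuous_ofReal.comp ?_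
    refine continuous_const.mul (continuous_const.mul ?_)
    exact (continuous_const.add continuous_id).rpow_const fun _ => Or.inr (by positivity)
  refine ge_of_tendsto ((hcont.tendsto 0).mono_left (nhdsWithin_le_nhds (s := Ioi 0))) ?_
  filter_upwards [self_mem_nhdsWithin] with ε hε
  exact key ε hε
end
end
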